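/- arXiv:1302.1336 — 5 statements merged into one kernel-verified Lean document; each statement's English description precedes it below -/
import Mathlib

section
/- Real embedding of observables preserves algebraic structure and expectation values: let n ≥ 1, let A^s be a Hermitian complex matrix on ι s for each s : Fin n, and let ρ be any complex matrix indexed by (Π s : Fin n, ι s). Then each real embedding Â^s has real entries and is symmetric (Â^s = (Â^s)ᵀ); if (A^s)² = A^s then (Â^s)² = Â^s; and tr[ρ̂·(⊗_s Â^s)] = Re tr[ρ·(⊗_s A^s)], where ρ̂ is the real embedding of ρ. In particular, if ρ and all A^s are Hermitian, then tr[ρ̂·(⊗_s Â^s)] = tr[ρ·(⊗_s A^s)]. -/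
open Matrix
open scoped Kronecker ComplexOrder

/-- Partial transpose on the first tensor factor. -/
def ptA {ιA ιB : Type*} (ρ : Matrix (ιA × ιB) (ιA × ιB) ℂ) : Matrix (ιA × ιB) (ιA × ιB) ℂ :=
  fun p q => ρ (q.1, p.2) (p.1, q.2)

/-- Sum of the absolute values of the negative eigenvalues of a Hermitian matrix
(0 if the matrix is not Hermitian). -/
noncomputable def negEig {ι : Type*} [Fintype ι] [DecidableEq ι] (M : Matrix ι ι ℂ) : ℝ :=
  letI := Classical.dec M.IsHermitian
  if h : M.IsHermitian then ∑ i, max 0 (-(h.eigenvalues i)) else 0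
/-- The 2×2 matrix Y = [[0,1],[-1,0]] (viewed as a complex matrix). -/
noncomputable def Ymat : Matrix (Fin 2) (Fin 2) ℂ := !![0, 1; -1, 0]

/-- The complex 2×2 matrix 1 - iY = [[1,-i],[i,1]]. -/
noncomputable def oneMinusIY : Matrix (Fin 2) (Fin 2) ℂ := !![1, -Complex.I; Complex.I, 1]

/-- Real embedding of an observable: Â = 1 ⊗ A_r + Y ⊗ A_i, as a block matrix
[[A_r, A_i], [-A_i, A_r]] on Fin 2 × ι. -/
noncomputable def obsEmbed {ι : Type*} (A : Matrix ι ι ℂ) :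
    Matrix (Fin 2 × ι) (Fin 2 × ι) ℂ :=
  fun p q => (1 : Matrix (Fin 2) (Fin 2) ℂ) p.1 q.1 * ((A p.2 q.2).re : ℂ)
    + Ymat p.1 q.1 * ((A p.2 q.2).im : ℂ)

/-- Real embedding of an n-partite state: the entry at row (a,i), column (b,j) is
2^(-n) · Re[(∏ s, (1-iY)(a s, b s)) · ρ(i,j)]. -/
noncomputable def stateEmbed {n : ℕ} {ι : Fin n → Type*}
    (ρ : Matrix ((s : Fin n) → ι s) ((s : Fin n) → ι s) ℂ) :
    Matrix ((s : Fin n) → Fin 2 × ι s) ((s : Fin n) → Fin 2 × ι s) ℂ :=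
  fun r c =>
    ((((2 : ℝ) ^ n)⁻¹ *
      ((∏ s, oneMinusIY (r s).1 (c s).1) * ρ (fun s => (r s).2) (fun s => (c s).2)).re : ℝ) : ℂ)

/-- Tensor product of one matrix per party. -/
def npTensor {n : ℕ} {ι : Fin n → Type*} (M : (s : Fin n) → Matrix (ι s) (ι s) ℂ) :
    Matrix ((s : Fin n) → ι s) ((s : Fin n) → ι s) ℂ :=
  fun i j => ∏ s, M s (i s) (j s)

/-- Partial transpose across the bipartition m : exchanges row and column index
at every coordinate s ∈ m. -/
def ptm {n : ℕ} {ι : Fin n → Type*} [DecidableEq (Fin n)] (m : Finset (Fin n))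
    (ρ : Matrix ((s : Fin n) → ι s) ((s : Fin n) → ι s) ℂ) :
    Matrix ((s : Fin n) → ι s) ((s : Fin n) → ι s) ℂ :=
  fun i j => ρ (fun s => if s ∈ m then j s else i s) (fun s => if s ∈ m then i s else j s)

/-!
Write `N = 1 - iY`. On one party, pairing `N` with the real embedding `Â = 1 ⊗ A_r + Y ⊗ A_i`
over the `Fin 2` factor gives `tr(N) A_r + tr(N Y) A_i = 2 A_r + 2i A_i = 2 A`. The pairing is
compatible with tensor products over the parties, so `tr[(N^{⊗n} ⊗ ρ) (⊗ Â^s)] = 2^n tr[ρ (⊗ A^s)]`.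
Since `⊗ Â^s` has real entries, replacing the first factor by its entrywise real part, which turns
`2^{-n} N^{⊗n} ⊗ ρ` into `ρ̂`, replaces the trace by its real part.
-/

section EntrywiseParts

variable {l m n : Type*}

/-- The entrywise real part `A_r` of a complex matrix, again as a complex matrix; Mathlib's
`realPart` is instead the Hermitian part `(A + Aᴴ) / 2`. -/
def entrywiseRe (A : Matrix m n ℂ) : Matrix m n ℂ := A.map fun z => (z.re : ℂ)

/-- The entrywise imaginary part `A_i` of a complex matrix, again as a complex matrix; Mathlib's
`imaginaryPart` is instead the Hermitian matrix `(A - Aᴴ) / (2i)`. -/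
def entrywiseIm (A : Matrix m n ℂ) : Matrix m n ℂ := A.map fun z => (z.im : ℂ)

theorem entrywiseRe_add_I_smul_entrywiseIm (A : Matrix m n ℂ) :
    entrywiseRe A + Complex.I • entrywiseIm A = A := by
  ext i j
  simp [entrywiseRe, entrywiseIm, mul_comm Complex.I, Complex.re_add_im]

theorem entrywiseRe_conjTranspose (A : Matrix m n ℂ) : entrywiseRe Aᴴ = (entrywiseRe A)ᵀ := by
  ext i j
  simp [entrywiseRe]

theorem entrywiseIm_conjTranspose (A : Matrix m n ℂ) : entrywiseIm Aᴴ = -(entrywiseIm A)ᵀ := by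
  ext i j
  simp [entrywiseIm]

theorem entrywiseRe_mul [Fintype m] (A : Matrix l m ℂ) (B : Matrix m n ℂ) :
    entrywiseRe (A * B) = entrywiseRe A * entrywiseRe B - entrywiseIm A * entrywiseIm B := by
  ext i j
  simp [entrywiseRe, entrywiseIm, mul_apply]

theorem entrywiseIm_mul [Fintype m] (A : Matrix l m ℂ) (B : Matrix m n ℂ) :
    entrywiseIm (A * B) = entrywiseRe A * entrywiseIm B + entrywiseIm A * entrywiseRe B := by
  ext i j
  simp [entrywiseRe, entrywiseIm, mul_apply, Finset.sum_add_distrib]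

theorem trace_entrywiseRe_mul_of_im_eq_zero [Fintype m] [Fintype n] (A : Matrix m n ℂ)
    {B : Matrix n m ℂ} (hB : ∀ i j, (B i j).im = 0) :
    trace (entrywiseRe A * B) = ((trace (A * B)).re : ℂ) := by
  have hB' : ∀ i j, B i j = ((B i j).re : ℂ) := fun i j => Complex.ext rfl (by simp [hB i j])
  simp only [trace, diag_apply, mul_apply, entrywiseRe, map_apply, Complex.re_sum,
    Complex.ofReal_sum]
  refine Finset.sum_congr rfl fun i _ => Finset.sum_congr rfl fun j _ => ?_
  rw [hB' j i, Complex.re_mul_ofReal, Complex.ofReal_mul]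

end EntrywiseParts

theorem isSelfAdjoint_trace_mul {R m : Type*} [NonUnitalCommSemiring R] [StarRing R] [Fintype m]
    {A B : Matrix m m R} (hA : A.IsHermitian) (hB : B.IsHermitian) :
    IsSelfAdjoint (trace (A * B)) := by
  rw [IsSelfAdjoint, ← trace_conjTranspose, conjTranspose_mul, hA.eq, hB.eq, trace_mul_comm]

theorem trace_submatrix_mul {m n R : Type*} [Fintype m] [Fintype n]
    [AddCommMonoid R] [Mul R] (e : m ≃ n) (A : Matrix n n R) (B : Matrix m m R) :
    trace (A.submatrix e e * B) = trace (A * B.submatrix e.symm e.symm) := by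
  simp only [trace, diag_apply, mul_apply, submatrix_apply]
  exact Fintype.sum_equiv e _ _ fun i => Fintype.sum_equiv e _ _ fun j => by
    simp only [Equiv.symm_apply_apply]

section BlockPairing

variable {κ ι R : Type*} [Fintype κ]

/-- The partial trace over `κ` of `(N ⊗ 1) * B`, with `B` read as a family of `κ × κ` blocks indexed
by `ι × ι`; it contracts the `κ` factor of `B` against `N`. -/
def blockPairing [Mul R] [AddCommMonoid R] (N : Matrix κ κ R) (B : Matrix (κ × ι) (κ × ι) R) :
    Matrix ι ι R :=
  of fun i j => trace (N * B.submatrix (·, i) (·, j))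

theorem blockPairing_add [NonUnitalNonAssocSemiring R] (N : Matrix κ κ R)
    (B C : Matrix (κ × ι) (κ × ι) R) :
    blockPairing N (B + C) = blockPairing N B + blockPairing N C := by
  ext i j
  simp [blockPairing, submatrix_add, Matrix.mul_add]

theorem blockPairing_kronecker [NonUnitalSemiring R] (N M : Matrix κ κ R) (A : Matrix ι ι R) :
    blockPairing N (M ⊗ₖ A) = of fun i j => trace (N * M) * A i j := by
  ext i j
  simp [blockPairing, trace, mul_apply, Finset.sum_mul, mul_assoc]

theorem trace_kronecker_mul [NonUnitalCommSemiring R] [Fintype ι] (N : Matrix κ κ R)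
    (ρ : Matrix ι ι R) (B : Matrix (κ × ι) (κ × ι) R) :
    trace ((N ⊗ₖ ρ) * B) = trace (ρ * blockPairing N B) := by
  simp only [trace, diag_apply, mul_apply, blockPairing, of_apply, submatrix_apply,
    kronecker_apply, Fintype.sum_prod_type_right, Finset.mul_sum]
  refine Finset.sum_congr rfl fun i _ => ?_
  rw [Finset.sum_comm]
  exact Finset.sum_congr rfl fun j _ => Finset.sum_congr rfl fun a _ =>
    Finset.sum_congr rfl fun b _ => by rw [mul_assoc, mul_left_comm]

end BlockPairing

section KroneckerNeg

variable {l m n p R : Type*} [Mul R] [HasDistribNeg R]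

theorem neg_kronecker (A : Matrix l m R) (B : Matrix n p R) : (-A) ⊗ₖ B = -(A ⊗ₖ B) := by
  ext
  simp

theorem kronecker_neg (A : Matrix l m R) (B : Matrix n p R) : A ⊗ₖ (-B) = -(A ⊗ₖ B) := by
  ext
  simp

end KroneckerNeg

section ObservableEmbedding

variable {ι : Type*}

theorem Ymat_mul_self : Ymat * Ymat = -1 := by
  ext a b
  fin_cases a <;> fin_cases b <;> simp [Ymat]

theorem Ymat_transpose : Ymatᵀ = -Ymat := by
  ext a b
  fin_cases a <;> fin_cases b <;> simp [Ymat]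

theorem trace_oneMinusIY : trace oneMinusIY = 2 := by
  simp [oneMinusIY, trace_fin_two, one_add_one_eq_two]

theorem trace_oneMinusIY_mul_Ymat : trace (oneMinusIY * Ymat) = 2 * Complex.I := by
  simp [oneMinusIY, Ymat, trace_fin_two, two_mul]

theorem obsEmbed_eq_kronecker (A : Matrix ι ι ℂ) :
    obsEmbed A = 1 ⊗ₖ entrywiseRe A + Ymat ⊗ₖ entrywiseIm A :=
  rfl

theorem obsEmbed_apply_im_eq_zero (A : Matrix ι ι ℂ) (p q : Fin 2 × ι) :
    (obsEmbed A p q).im = 0 := by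
  obtain ⟨a, i⟩ := p
  obtain ⟨b, j⟩ := q
  fin_cases a <;> fin_cases b <;> simp [obsEmbed, Ymat]

theorem obsEmbed_conjTranspose (A : Matrix ι ι ℂ) : obsEmbed Aᴴ = (obsEmbed A)ᵀ := by
  simp only [obsEmbed_eq_kronecker, transpose_add, ← kroneckerMap_transpose, transpose_one,
    Ymat_transpose, entrywiseRe_conjTranspose, entrywiseIm_conjTranspose, neg_kronecker,
    kronecker_neg]

theorem obsEmbed_mul [Fintype ι] (A B : Matrix ι ι ℂ) :
    obsEmbed (A * B) = obsEmbed A * obsEmbed B := by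
  simp only [obsEmbed_eq_kronecker, entrywiseRe_mul, entrywiseIm_mul, Matrix.add_mul,
    Matrix.mul_add, ← mul_kronecker_mul, Matrix.one_mul, Matrix.mul_one, Ymat_mul_self,
    neg_kronecker, kronecker_neg, kronecker_add, sub_eq_add_neg]
  abel

theorem blockPairing_oneMinusIY_obsEmbed (A : Matrix ι ι ℂ) :
    blockPairing oneMinusIY (obsEmbed A) = (2 : ℝ) • A := by
  conv_rhs => rw [← entrywiseRe_add_I_smul_entrywiseIm A]
  rw [obsEmbed_eq_kronecker, blockPairing_add, blockPairing_kronecker, blockPairing_kronecker,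
    Matrix.mul_one, trace_oneMinusIY, trace_oneMinusIY_mul_Ymat]
  ext i j
  simp [mul_assoc]

end ObservableEmbedding

section Multipartite

variable {n : ℕ} {ι κ : Fin n → Type*}

theorem npTensor_smul {R : Type*} [CommSemiring R] [Algebra R ℂ] (c : Fin n → R)
    (A : (s : Fin n) → Matrix (ι s) (ι s) ℂ) :
    npTensor (fun s => c s • A s) = (∏ s, c s) • npTensor A := by
  ext i j
  simp [npTensor, Algebra.smul_def, Finset.prod_mul_distrib]

theorem npTensor_isHermitian {A : (s : Fin n) → Matrix (ι s) (ι s) ℂ}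
    (hA : ∀ s, (A s).IsHermitian) : (npTensor A).IsHermitian :=
  IsHermitian.ext fun i j => by
    simp only [npTensor, star_prod, (hA _).apply]

theorem npTensor_apply_im_eq_zero {A : (s : Fin n) → Matrix (ι s) (ι s) ℂ}
    (hA : ∀ s i j, (A s i j).im = 0) (i j : (s : Fin n) → ι s) : (npTensor A i j).im = 0 :=
  Finset.prod_induction _ (fun z : ℂ => z.im = 0)
    (fun z w hz hw => by simp [Complex.mul_im, hz, hw]) Complex.one_im fun s _ => hA s (i s) (j s)

theorem blockPairing_npTensor [∀ s, Fintype (κ s)] (N : (s : Fin n) → Matrix (κ s) (κ s) ℂ)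
    (B : (s : Fin n) → Matrix (κ s × ι s) (κ s × ι s) ℂ) :
    blockPairing (npTensor N) ((npTensor B).submatrix (Equiv.arrowProdEquivProdArrow _ κ ι).symm
      (Equiv.arrowProdEquivProdArrow _ κ ι).symm) =
      npTensor fun s => blockPairing (N s) (B s) := by
  ext i j
  simp only [blockPairing, npTensor, trace, diag_apply, mul_apply, of_apply, submatrix_apply,
    Fintype.prod_sum, Finset.prod_mul_distrib]
  rfl

/-- The Kronecker product of two multipartite matrices, with the two factors held by each party
grouped together: `(⨂ κ s) ⊗ (⨂ ι s)` is regrouped as `⨂ (κ s ⊗ ι s)`. -/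
def partywiseKronecker (M : Matrix ((s : Fin n) → κ s) ((s : Fin n) → κ s) ℂ)
    (ρ : Matrix ((s : Fin n) → ι s) ((s : Fin n) → ι s) ℂ) :
    Matrix ((s : Fin n) → κ s × ι s) ((s : Fin n) → κ s × ι s) ℂ :=
  (M ⊗ₖ ρ).submatrix (Equiv.arrowProdEquivProdArrow _ κ ι) (Equiv.arrowProdEquivProdArrow _ κ ι)

theorem trace_partywiseKronecker_npTensor_mul_npTensor [∀ s, Fintype (κ s)]
    [∀ s, Fintype (ι s)] (N : (s : Fin n) → Matrix (κ s) (κ s) ℂ)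
    (ρ : Matrix ((s : Fin n) → ι s) ((s : Fin n) → ι s) ℂ)
    (B : (s : Fin n) → Matrix (κ s × ι s) (κ s × ι s) ℂ) :
    trace (partywiseKronecker (npTensor N) ρ * npTensor B) =
      trace (ρ * npTensor fun s => blockPairing (N s) (B s)) := by
  rw [partywiseKronecker, trace_submatrix_mul, trace_kronecker_mul, blockPairing_npTensor]

theorem npTensor_blockPairing_oneMinusIY_obsEmbed (A : (s : Fin n) → Matrix (ι s) (ι s) ℂ) :
    (npTensor fun s => blockPairing oneMinusIY (obsEmbed (A s))) =
      ((2 : ℝ) ^ n) • npTensor A := by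
  simp only [blockPairing_oneMinusIY_obsEmbed, npTensor_smul, Finset.prod_const,
    Finset.card_univ, Fintype.card_fin]

theorem stateEmbed_eq_smul_entrywiseRe
    (ρ : Matrix ((s : Fin n) → ι s) ((s : Fin n) → ι s) ℂ) :
    stateEmbed ρ =
      ((2 : ℝ) ^ n)⁻¹ • entrywiseRe (partywiseKronecker (npTensor fun _ => oneMinusIY) ρ) := by
  ext r c
  simp [stateEmbed, partywiseKronecker, entrywiseRe, npTensor, Equiv.arrowProdEquivProdArrow]

theorem trace_stateEmbed_mul_npTensor_of_im_eq_zero [∀ s, Fintype (ι s)]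
    (ρ : Matrix ((s : Fin n) → ι s) ((s : Fin n) → ι s) ℂ)
    {B : (s : Fin n) → Matrix (Fin 2 × ι s) (Fin 2 × ι s) ℂ}
    (hB : ∀ s p q, (B s p q).im = 0) :
    trace (stateEmbed ρ * npTensor B) =
      (((2 : ℝ) ^ n)⁻¹ *
        (trace (ρ * npTensor fun s => blockPairing oneMinusIY (B s))).re : ℝ) := by
  rw [stateEmbed_eq_smul_entrywiseRe, smul_mul, trace_smul,
    trace_entrywiseRe_mul_of_im_eq_zero _ (npTensor_apply_im_eq_zero hB),
    trace_partywiseKronecker_npTensor_mul_npTensor, Complex.real_smul, Complex.ofReal_mul]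

theorem trace_stateEmbed_mul_npTensor_obsEmbed [∀ s, Fintype (ι s)]
    (ρ : Matrix ((s : Fin n) → ι s) ((s : Fin n) → ι s) ℂ)
    (A : (s : Fin n) → Matrix (ι s) (ι s) ℂ) :
    trace (stateEmbed ρ * npTensor fun s => obsEmbed (A s)) =
      ((trace (ρ * npTensor A)).re : ℂ) := by
  rw [trace_stateEmbed_mul_npTensor_of_im_eq_zero ρ fun s => obsEmbed_apply_im_eq_zero (A s),
    npTensor_blockPairing_oneMinusIY_obsEmbed, Matrix.mul_smul, trace_smul, Complex.smul_re,
    smul_eq_mul, inv_mul_cancel_left₀ (by positivity)]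

end Multipartite

/-- the real embedding of observables has real symmetric entries, preserves
idempotency, and preserves (the real part of) expectation values; for Hermitian ρ and
Hermitian observables the expectation values themselves are preserved. -/
theorem realEmbedding_preserves_structure_and_expectations
    {n : ℕ} (hn : 1 ≤ n) {ι : Fin n → Type*} [∀ s, Fintype (ι s)] [∀ s, Nonempty (ι s)]
    (A : (s : Fin n) → Matrix (ι s) (ι s) ℂ) (hA : ∀ s, (A s).IsHermitian)
    (ρ : Matrix ((s : Fin n) → ι s) ((s : Fin n) → ι s) ℂ) :
    (∀ s, (∀ p q, ((obsEmbed (A s)) p q).im = 0) ∧ (obsEmbed (A s))ᵀ = obsEmbed (A s)) ∧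
    (∀ s, A s * A s = A s → obsEmbed (A s) * obsEmbed (A s) = obsEmbed (A s)) ∧
    Matrix.trace (stateEmbed ρ * npTensor (fun s => obsEmbed (A s))) =
      ((Matrix.trace (ρ * npTensor A)).re : ℂ) ∧
    (ρ.IsHermitian →
      Matrix.trace (stateEmbed ρ * npTensor (fun s => obsEmbed (A s))) =
        Matrix.trace (ρ * npTensor A)) := by
  have htrace := trace_stateEmbed_mul_npTensor_obsEmbed ρ A
  refine ⟨fun s => ⟨obsEmbed_apply_im_eq_zero (A s), ?_⟩, fun s hidem => ?_, htrace, fun hρ => ?_⟩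
  · rw [← obsEmbed_conjTranspose, (hA s).eq]
  · rw [← obsEmbed_mul, hidem]
  · rw [htrace]
    exact Complex.conj_eq_iff_re.mp (isSelfAdjoint_trace_mul hρ (npTensor_isHermitian hA))
end

section
/- Spectral properties of the real embedding: let ρ be a Hermitian complex matrix indexed by (Π s : Fin n, ι s) and let ρ̂ be its real embedding. Then ρ̂ has real entries and is symmetric (ρ̂ = ρ̂ᵀ, hence Hermitian), tr ρ̂ = tr ρ, the sums of absolute values of the eigenvalues (with multiplicity) agree, Σᵢ |λᵢ(ρ̂)| = Σᵢ |λᵢ(ρ)|, and if ρ is positive semidefinite then so is ρ̂. -/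
open Matrix
open scoped Kronecker ComplexOrder

/-- Sum of the absolute values of the eigenvalues (with multiplicity) of a Hermitian
matrix (0 if not Hermitian). -/
noncomputable def absEigSum {ι : Type*} [Fintype ι] [DecidableEq ι] (M : Matrix ι ι ℂ) : ℝ :=
  letI := Classical.dec M.IsHermitian
  if h : M.IsHermitian then ∑ i, |h.eigenvalues i| else 0

/-!
With `u = (1, i)` one has `u uᴴ = 1 - iY`, so that for Hermitian `ρ` the real embedding is half the
sum of `A = 2⁻ⁿ W ρ Wᴴ` and its entrywise conjugate `Ā = Aᵀ`, where `W = ⨂ (u ⊗ 1)`. Since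
`Wᴴ W = 2ⁿ`, the matrix `A` has the nonzero eigenvalues of `ρ`. If `n ≥ 1`, then `uᵀ u = 0` gives
`Wᵀ W = 0`, hence `Aᵀ A = 0` and the nonzero spectrum of `Aᵀ + A` is the disjoint union, with
multiplicity, of two copies of that of `A`. If `n = 0`, then `Aᵀ = A`.
-/

section Charpoly

open Polynomial

variable {n : Type*} [Fintype n] [DecidableEq n]

theorem charpoly_mul_charpoly_of_mul_eq_zero {R : Type*} [CommRing R] {A B : Matrix n n R}
    (h : A * B = 0) :
    A.charpoly * B.charpoly = X ^ Fintype.card n * (A + B).charpoly := by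
  have hAB : charmatrix A * charmatrix B = (X : R[X]) • charmatrix (A + B) := by
    simp only [charmatrix, map_add, sub_mul, mul_sub, ← map_mul, h, map_zero, smul_sub, smul_add,
      scalar_apply, ← smul_one_eq_diagonal, smul_mul_assoc, mul_smul_comm, one_mul, mul_one]
    abel
  rw [charpoly, charpoly, charpoly, ← det_mul, hAB, det_smul]

theorem charpoly_smul_of_isHermitian {𝕜 : Type*} [RCLike 𝕜] {M : Matrix n n 𝕜}
    (hM : M.IsHermitian) (c : 𝕜) :
    (c • M).charpoly = ∏ i, (X - C (c * (hM.eigenvalues i : 𝕜))) := by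
  conv_lhs => rw [hM.spectral_theorem, Unitary.conjStarAlgAut_apply, ← smul_mul_assoc,
    charpoly_mul_comm, mul_smul_comm, ← mul_assoc]
  simp [← diagonal_smul, charpoly_diagonal]

/-- The sum of the absolute values of the roots of a polynomial, counted with multiplicity; for the
characteristic polynomial of a Hermitian matrix this is `absEigSum`. -/
noncomputable def rootNormSum {K : Type*} [NormedField K] (p : K[X]) : ℝ :=
  (p.roots.map (‖·‖)).sum

theorem rootNormSum_mul {K : Type*} [NormedField K] {p q : K[X]} (hp : p ≠ 0) (hq : q ≠ 0) :
    rootNormSum (p * q) = rootNormSum p + rootNormSum q := by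
  simp [rootNormSum, roots_mul (mul_ne_zero hp hq)]

theorem rootNormSum_X_pow_mul {K : Type*} [NormedField K] (k : ℕ) {p : K[X]} (hp : p ≠ 0) :
    rootNormSum (X ^ k * p) = rootNormSum p := by
  rw [rootNormSum_mul (pow_ne_zero k X_ne_zero) hp]
  simp [rootNormSum, Multiset.map_nsmul, Multiset.sum_nsmul]

theorem rootNormSum_prod_X_sub_C {ι K : Type*} [Fintype ι] [NormedField K] (z : ι → K) :
    rootNormSum (∏ i, (X - C (z i))) = ∑ i, ‖z i‖ := by
  simp [rootNormSum, roots_prod _ _ (Finset.prod_ne_zero_iff.mpr fun i _ => X_sub_C_ne_zero (z i))]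

end Charpoly

section AbsEigSum

variable {m n : Type*} [Fintype m] [DecidableEq m] [Fintype n] [DecidableEq n]

theorem absEigSum_eq_rootNormSum_charpoly {M : Matrix n n ℂ} (hM : M.IsHermitian) :
    absEigSum M = rootNormSum M.charpoly := by
  rw [absEigSum, dif_pos hM, hM.charpoly_eq, rootNormSum_prod_X_sub_C]
  simp

theorem absEigSum_transpose {M : Matrix n n ℂ} (hM : M.IsHermitian) :
    absEigSum Mᵀ = absEigSum M := by
  rw [absEigSum_eq_rootNormSum_charpoly hM.transpose, charpoly_transpose,
    absEigSum_eq_rootNormSum_charpoly hM]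

theorem absEigSum_smul {M : Matrix n n ℂ} (hM : M.IsHermitian) (r : ℝ) :
    absEigSum (r • M) = |r| * absEigSum M := by
  have hrM : (r • M).IsHermitian := hM.smul (.all r)
  rw [absEigSum_eq_rootNormSum_charpoly hrM, ← Complex.coe_smul, charpoly_smul_of_isHermitian hM,
    rootNormSum_prod_X_sub_C, absEigSum, dif_pos hM, Finset.mul_sum]
  simp

theorem absEigSum_add_of_mul_eq_zero {A B : Matrix n n ℂ} (hA : A.IsHermitian)
    (hB : B.IsHermitian) (hAB : A * B = 0) :
    absEigSum (A + B) = absEigSum A + absEigSum B := by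
  rw [absEigSum_eq_rootNormSum_charpoly hA, absEigSum_eq_rootNormSum_charpoly hB,
    absEigSum_eq_rootNormSum_charpoly (hA.add hB),
    ← rootNormSum_mul (charpoly_monic A).ne_zero (charpoly_monic B).ne_zero,
    charpoly_mul_charpoly_of_mul_eq_zero hAB, rootNormSum_X_pow_mul _ (charpoly_monic _).ne_zero]

theorem absEigSum_mul_comm {A : Matrix m n ℂ} {B : Matrix n m ℂ} (hAB : (A * B).IsHermitian)
    (hBA : (B * A).IsHermitian) : absEigSum (A * B) = absEigSum (B * A) := by
  have h := congrArg rootNormSum (charpoly_mul_comm' A B)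
  rwa [rootNormSum_X_pow_mul _ (charpoly_monic _).ne_zero,
    rootNormSum_X_pow_mul _ (charpoly_monic _).ne_zero, ← absEigSum_eq_rootNormSum_charpoly hAB,
    ← absEigSum_eq_rootNormSum_charpoly hBA] at h

end AbsEigSum

section PiKronecker

variable {σ R : Type*} [Fintype σ] {κ ι τ : σ → Type*} [CommSemiring R]

/-- The tensor product of a finite family of rectangular matrices, on the product index types;
`npTensor` is the case of square matrices. -/
def piKronecker (M : ∀ s, Matrix (κ s) (ι s) R) : Matrix (∀ s, κ s) (∀ s, ι s) R :=
  of fun i j => ∏ s, M s (i s) (j s)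

theorem transpose_piKronecker (M : ∀ s, Matrix (κ s) (ι s) R) :
    (piKronecker M)ᵀ = piKronecker fun s => (M s)ᵀ :=
  rfl

theorem conjTranspose_piKronecker [StarRing R] (M : ∀ s, Matrix (κ s) (ι s) R) :
    (piKronecker M)ᴴ = piKronecker fun s => (M s)ᴴ := by
  ext i j
  simp [piKronecker, star_prod]

theorem piKronecker_mul [DecidableEq σ] [∀ s, Fintype (ι s)] (M : ∀ s, Matrix (κ s) (ι s) R)
    (N : ∀ s, Matrix (ι s) (τ s) R) :
    piKronecker M * piKronecker N = piKronecker fun s => M s * N s := by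
  ext i j
  simp [piKronecker, mul_apply, ← Finset.prod_mul_distrib, Fintype.prod_sum]

theorem piKronecker_smul (c : σ → R) (M : ∀ s, Matrix (κ s) (ι s) R) :
    (piKronecker fun s => c s • M s) = (∏ s, c s) • piKronecker M := by
  ext i j
  simp [piKronecker, Finset.prod_mul_distrib]

theorem piKronecker_one [∀ s, DecidableEq (ι s)] :
    (piKronecker fun s => (1 : Matrix (ι s) (ι s) R)) = 1 := by
  ext i j
  simp [piKronecker, one_apply, Fintype.prod_ite_zero, funext_iff]

theorem piKronecker_zero [Nonempty σ] :
    (piKronecker fun s => (0 : Matrix (κ s) (ι s) R)) = 0 := by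
  ext i j
  simp [piKronecker]

end PiKronecker

section PhaseLift

/-- The vector `u = (1, i)`, which spans the range of `1 - iY`. -/
noncomputable def phaseVec : Fin 2 → ℂ := ![1, Complex.I]

theorem oneMinusIY_eq_vecMulVec : oneMinusIY = vecMulVec phaseVec (star phaseVec) := by
  ext a b
  fin_cases a <;> fin_cases b <;> simp [oneMinusIY, phaseVec, vecMulVec_apply]

theorem isHermitian_oneMinusIY : oneMinusIY.IsHermitian := by
  rw [oneMinusIY_eq_vecMulVec]
  exact (posSemidef_vecMulVec_self_star phaseVec).isHermitian

variable {κ : Type*} [DecidableEq κ]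

/-- The matrix `u ⊗ 1` of the map `x ↦ u ⊗ x`, where `u = phaseVec`. -/
noncomputable def phaseLift (κ : Type*) [DecidableEq κ] : Matrix (Fin 2 × κ) κ ℂ :=
  of fun p k => phaseVec p.1 * (1 : Matrix κ κ ℂ) p.2 k

variable [Fintype κ]

theorem conjTranspose_phaseLift_mul_self : (phaseLift κ)ᴴ * phaseLift κ = (2 : ℂ) • 1 := by
  ext i j
  simp [phaseLift, phaseVec, mul_apply, Fintype.sum_prod_type, one_apply, apply_ite star,
    one_add_one_eq_two, @eq_comm _ j]

theorem transpose_phaseLift_mul_self : (phaseLift κ)ᵀ * phaseLift κ = 0 := by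
  ext i j
  simp [phaseLift, phaseVec, mul_apply, Fintype.sum_prod_type, one_apply]

end PhaseLift

section PiPhaseLift

variable {n : ℕ} {ι : Fin n → Type*} [∀ s, DecidableEq (ι s)]

/-- The `n`-partite lift, the tensor product of the local maps `x ↦ u ⊗ x`. -/
noncomputable def piPhaseLift (ι : Fin n → Type*) [∀ s, DecidableEq (ι s)] :
    Matrix ((s : Fin n) → Fin 2 × ι s) ((s : Fin n) → ι s) ℂ :=
  piKronecker fun s => phaseLift (ι s)

theorem piPhaseLift_apply (r : (s : Fin n) → Fin 2 × ι s) (i : (s : Fin n) → ι s) :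
    piPhaseLift ι r i = (∏ s, phaseVec (r s).1) *
      (1 : Matrix ((s : Fin n) → ι s) ((s : Fin n) → ι s) ℂ) (fun s => (r s).2) i := by
  simp only [← piKronecker_one, piPhaseLift, piKronecker, phaseLift, of_apply,
    Finset.prod_mul_distrib]

variable [∀ s, Fintype (ι s)]

theorem conjTranspose_piPhaseLift_mul_self :
    (piPhaseLift ι)ᴴ * piPhaseLift ι = (2 ^ n : ℂ) • 1 := by
  simp only [piPhaseLift, conjTranspose_piKronecker, piKronecker_mul,
    conjTranspose_phaseLift_mul_self, piKronecker_smul, piKronecker_one, Finset.prod_const,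
    Finset.card_univ, Fintype.card_fin]

theorem conjTranspose_piPhaseLift_mul_inv_smul_mul
    (ρ : Matrix ((s : Fin n) → ι s) ((s : Fin n) → ι s) ℂ) :
    (piPhaseLift ι)ᴴ * (((2 : ℝ) ^ n)⁻¹ • (piPhaseLift ι * ρ)) = ρ := by
  rw [Matrix.mul_smul, ← Matrix.mul_assoc, conjTranspose_piPhaseLift_mul_self, Matrix.smul_mul,
    Matrix.one_mul]
  ext i j
  simp

theorem transpose_piPhaseLift_mul_self [Nonempty (Fin n)] :
    (piPhaseLift ι)ᵀ * piPhaseLift ι = 0 := by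
  simp only [piPhaseLift, transpose_piKronecker, piKronecker_mul, transpose_phaseLift_mul_self,
    piKronecker_zero]

end PiPhaseLift

section ComplexEmbed

variable {n : ℕ} {ι : Fin n → Type*} {ρ : Matrix ((s : Fin n) → ι s) ((s : Fin n) → ι s) ℂ}

/-- The matrix `2⁻ⁿ (1 - iY)^{⊗n} ⊗ ρ`, with the tensor factors arranged as in `stateEmbed ρ`, which
is its entrywise real part. -/
noncomputable def complexEmbed (ρ : Matrix ((s : Fin n) → ι s) ((s : Fin n) → ι s) ℂ) :
    Matrix ((s : Fin n) → Fin 2 × ι s) ((s : Fin n) → Fin 2 × ι s) ℂ :=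
  ((2 : ℝ) ^ n)⁻¹ • of fun r c =>
    (∏ s, oneMinusIY (r s).1 (c s).1) * ρ (fun s => (r s).2) (fun s => (c s).2)

theorem isHermitian_complexEmbed (hρ : ρ.IsHermitian) : (complexEmbed ρ).IsHermitian := by
  refine IsHermitian.smul (.ext fun r c => ?_) (.all _)
  simp only [of_apply, star_mul', star_prod, isHermitian_oneMinusIY.apply, hρ.apply]

theorem complexEmbed_eq_smul_mul_mul_conjTranspose [∀ s, Fintype (ι s)] [∀ s, DecidableEq (ι s)]
    (ρ : Matrix ((s : Fin n) → ι s) ((s : Fin n) → ι s) ℂ) :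
    complexEmbed ρ = ((2 : ℝ) ^ n)⁻¹ • (piPhaseLift ι * ρ * (piPhaseLift ι)ᴴ) := by
  rw [complexEmbed]
  congr 1
  ext r c
  simp [mul_apply, piPhaseLift_apply, one_apply, oneMinusIY_eq_vecMulVec, vecMulVec_apply,
    Finset.prod_mul_distrib, apply_ite, mul_right_comm]

theorem transpose_complexEmbed_mul_self [Nonempty (Fin n)] [∀ s, Fintype (ι s)]
    (ρ : Matrix ((s : Fin n) → ι s) ((s : Fin n) → ι s) ℂ) :
    (complexEmbed ρ)ᵀ * complexEmbed ρ = 0 := by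
  classical
  set W := piPhaseLift ι
  have hW : Wᴴᵀ * ρᵀ * (Wᵀ * W) * (ρ * Wᴴ) = 0 := by
    rw [transpose_piPhaseLift_mul_self, Matrix.mul_zero, Matrix.zero_mul]
  simp only [Matrix.mul_assoc] at hW
  simp only [complexEmbed_eq_smul_mul_mul_conjTranspose, transpose_smul, transpose_mul,
    Matrix.smul_mul, Matrix.mul_smul, Matrix.mul_assoc, W, hW, smul_zero]

theorem trace_complexEmbed [∀ s, Fintype (ι s)]
    (ρ : Matrix ((s : Fin n) → ι s) ((s : Fin n) → ι s) ℂ) :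
    (complexEmbed ρ).trace = ρ.trace := by
  classical
  rw [complexEmbed_eq_smul_mul_mul_conjTranspose, ← Matrix.smul_mul, trace_mul_comm,
    conjTranspose_piPhaseLift_mul_inv_smul_mul]

theorem posSemidef_complexEmbed [∀ s, Finite (ι s)] (hρ : ρ.PosSemidef) :
    (complexEmbed ρ).PosSemidef := by
  classical
  have := fun s => Fintype.ofFinite (ι s)
  rw [complexEmbed_eq_smul_mul_mul_conjTranspose]
  exact (hρ.mul_mul_conjTranspose_same _).smul (by positivity)

theorem absEigSum_complexEmbed [∀ s, Fintype (ι s)] [∀ s, DecidableEq (ι s)]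
    (hρ : ρ.IsHermitian) :
    absEigSum (complexEmbed ρ) = absEigSum ρ := by
  have hA := isHermitian_complexEmbed hρ
  rw [complexEmbed_eq_smul_mul_mul_conjTranspose, ← Matrix.smul_mul] at hA ⊢
  rw [absEigSum_mul_comm hA (by rwa [conjTranspose_piPhaseLift_mul_inv_smul_mul]),
    conjTranspose_piPhaseLift_mul_inv_smul_mul]

end ComplexEmbed

section StateEmbed

variable {n : ℕ} {ι : Fin n → Type*} {ρ : Matrix ((s : Fin n) → ι s) ((s : Fin n) → ι s) ℂ}

theorem stateEmbed_apply_eq_re_complexEmbed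
    (ρ : Matrix ((s : Fin n) → ι s) ((s : Fin n) → ι s) ℂ) (r c : (s : Fin n) → Fin 2 × ι s) :
    stateEmbed ρ r c = (complexEmbed ρ r c).re := by
  rw [stateEmbed, complexEmbed, Matrix.smul_apply, Complex.smul_re, of_apply, smul_eq_mul]

theorem stateEmbed_eq_half_smul_transpose_add (hρ : ρ.IsHermitian) :
    stateEmbed ρ = (2⁻¹ : ℝ) • ((complexEmbed ρ)ᵀ + complexEmbed ρ) := by
  ext r c
  rw [stateEmbed_apply_eq_re_complexEmbed, Matrix.smul_apply, Matrix.add_apply, transpose_apply,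
    ← (isHermitian_complexEmbed hρ).apply c r, add_comm, RCLike.star_def, Complex.add_conj]
  simp

theorem transpose_stateEmbed (hρ : ρ.IsHermitian) : (stateEmbed ρ)ᵀ = stateEmbed ρ := by
  rw [stateEmbed_eq_half_smul_transpose_add hρ, transpose_smul, transpose_add,
    transpose_transpose, add_comm]

theorem isHermitian_stateEmbed (hρ : ρ.IsHermitian) : (stateEmbed ρ).IsHermitian := by
  rw [stateEmbed_eq_half_smul_transpose_add hρ]
  have hA := isHermitian_complexEmbed hρ
  exact (hA.transpose.add hA).smul (.all _)

theorem trace_stateEmbed [∀ s, Fintype (ι s)] (hρ : ρ.IsHermitian) :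
    (stateEmbed ρ).trace = ρ.trace := by
  rw [stateEmbed_eq_half_smul_transpose_add hρ, trace_smul, trace_add, trace_transpose,
    trace_complexEmbed, ← two_smul ℝ, inv_smul_smul₀ two_ne_zero]

theorem posSemidef_stateEmbed [∀ s, Finite (ι s)] (hρ : ρ.PosSemidef) :
    (stateEmbed ρ).PosSemidef := by
  rw [stateEmbed_eq_half_smul_transpose_add hρ.isHermitian]
  have hA := posSemidef_complexEmbed hρ
  exact (hA.transpose.add hA).smul (by positivity)

variable [∀ s, Fintype (ι s)] [∀ s, DecidableEq (ι s)]

theorem absEigSum_transpose_add_complexEmbed (hρ : ρ.IsHermitian) :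
    absEigSum ((complexEmbed ρ)ᵀ + complexEmbed ρ) = 2 * absEigSum ρ := by
  have hA := isHermitian_complexEmbed hρ
  rw [← absEigSum_complexEmbed hρ]
  rcases isEmpty_or_nonempty (Fin n) with _ | _
  · have hAt : (complexEmbed ρ)ᵀ = complexEmbed ρ := by
      ext r c
      rw [transpose_apply, Subsingleton.elim r c]
    rw [hAt, ← two_smul ℝ, absEigSum_smul hA, abs_two]
  · rw [absEigSum_add_of_mul_eq_zero hA.transpose hA (transpose_complexEmbed_mul_self ρ),
      absEigSum_transpose hA, two_mul]

theorem absEigSum_stateEmbed (hρ : ρ.IsHermitian) :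
    absEigSum (stateEmbed ρ) = absEigSum ρ := by
  have hA := isHermitian_complexEmbed hρ
  rw [stateEmbed_eq_half_smul_transpose_add hρ, absEigSum_smul (hA.transpose.add hA),
    absEigSum_transpose_add_complexEmbed hρ, abs_of_pos (by positivity),
    inv_mul_cancel_left₀ two_ne_zero]

end StateEmbed

/-- spectral properties of the real embedding of a Hermitian matrix ρ:
real entries, symmetric (hence Hermitian), same trace, same sum of absolute values of
eigenvalues, and positive semidefiniteness is preserved. -/
theorem realEmbedding_spectral_properties
    {n : ℕ} {ι : Fin n → Type*} [∀ s, Fintype (ι s)] [∀ s, Nonempty (ι s)]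
    [∀ s, DecidableEq (ι s)]
    (ρ : Matrix ((s : Fin n) → ι s) ((s : Fin n) → ι s) ℂ) (hρ : ρ.IsHermitian) :
    (∀ p q, ((stateEmbed ρ) p q).im = 0) ∧
    (stateEmbed ρ)ᵀ = stateEmbed ρ ∧
    (stateEmbed ρ).IsHermitian ∧
    Matrix.trace (stateEmbed ρ) = Matrix.trace ρ ∧
    absEigSum (stateEmbed ρ) = absEigSum ρ ∧
    (ρ.PosSemidef → (stateEmbed ρ).PosSemidef) := by
  refine ⟨fun _ _ => Complex.ofReal_im _, transpose_stateEmbed hρ, isHermitian_stateEmbed hρ,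
    trace_stateEmbed hρ, absEigSum_stateEmbed hρ, posSemidef_stateEmbed⟩
end

section
/- The real embedding preserves the negativity across every bipartition: let ρ be a Hermitian complex matrix indexed by (Π s : Fin n, ι s), let m ⊆ Fin n, and let ρ̂ be the real embedding of ρ, on whose index the partial transpose T_m exchanges the full coordinates (Fin 2 × ι s) of row and column for every s ∈ m. Then Σᵢ |λᵢ((ρ̂)^{T_m})| = Σᵢ |λᵢ(ρ^{T_m})| (sums of absolute values of eigenvalues with multiplicity), and consequently N_m(ρ̂) = N_m(ρ). -/
open Matrix
open scoped Kronecker ComplexOrder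

/-!
The trace norm and the negativity of `A` are `tr f(A)` for the positively homogeneous functions
`f x = |x|` and `f x = max 0 (-x)`. After regrouping indices, `ρ̂^{T_m} = Re (q ⊗ σ)` with
`σ = ρ^{T_m}`, where `q` is a tensor product of copies of `(1 - iY) / 2` and its transpose: a
projection of trace one which, as soon as there is a party, is orthogonal to its conjugate `q̄`.
Hence `σ ↦ q ⊗ σ + q̄ ⊗ σ̄ = 2 Re (q ⊗ σ)` is a `*`-homomorphism and commutes with the functional
calculus, so `f (Re (q ⊗ σ)) = Re (q ⊗ f(σ))`, whose trace is `tr q · tr f(σ) = tr f(σ)`.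
-/

section FunctionalCalculus

variable {𝕜 α β : Type*} [RCLike 𝕜] [Fintype α] [DecidableEq α] [Fintype β] [DecidableEq β]

theorem trace_cfc_eq_sum_eigenvalues {A : Matrix α α 𝕜} (hA : A.IsHermitian) (f : ℝ → ℝ) :
    (cfc f A).trace = ∑ i, (f (hA.eigenvalues i) : 𝕜) := by
  rw [hA.cfc_eq, IsHermitian.cfc, Unitary.conjStarAlgAut_apply, trace_mul_cycle,
    Unitary.coe_star_mul_self, one_mul, trace_diagonal]
  rfl

theorem continuousOn_spectrum (A : Matrix α α 𝕜) (f : ℝ → ℝ) : ContinuousOn f (spectrum ℝ A) :=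
  A.finite_real_spectrum.continuousOn f

theorem continuousOn_quasispectrum {α : Type*} [Fintype α] (A : Matrix α α 𝕜) (f : ℝ → ℝ) :
    ContinuousOn f (quasispectrum ℝ A) := by
  classical
  rw [quasispectrum_eq_spectrum_union_zero]
  exact (A.finite_real_spectrum.union (Set.finite_singleton 0)).continuousOn f

theorem map_cfc_of_map_zero (φ : Matrix α α 𝕜 →⋆ₙₐ[ℝ] Matrix β β 𝕜) {f : ℝ → ℝ} (hf : f 0 = 0)
    {A : Matrix α α 𝕜} (hA : A.IsHermitian) : φ (cfc f A) = cfc f (φ A) := by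
  have hφ : Continuous φ :=
    LinearMap.continuous_of_finiteDimensional (φ : Matrix α α 𝕜 →ₗ[ℝ] Matrix β β 𝕜)
  have hφA : IsSelfAdjoint (φ A) := hA.isSelfAdjoint.map φ
  rw [← cfcₙ_eq_cfc (continuousOn_quasispectrum A f) hf,
    ← cfcₙ_eq_cfc (continuousOn_quasispectrum (φ A) f) hf]
  exact φ.map_cfcₙ f A (continuousOn_quasispectrum A f) hf hφ hA hφA

theorem cfc_submatrix_equiv (e : β ≃ α) (f : ℝ → ℝ) {A : Matrix α α 𝕜} (hA : A.IsHermitian) :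
    cfc f (A.submatrix e e) = (cfc f A).submatrix e e := by
  let φ : Matrix α α 𝕜 ≃⋆ₐ[ℝ] Matrix β β 𝕜 :=
    .ofAlgEquiv (reindexAlgEquiv ℝ 𝕜 e.symm) fun A => rfl
  have hφ : Continuous φ := continuous_id.matrix_submatrix e e
  exact (StarAlgHomClass.map_cfc φ f A (continuousOn_spectrum A f) hφ hA (hA.submatrix e)).symm

theorem trace_cfc_submatrix_equiv (e : β ≃ α) (f : ℝ → ℝ) {A : Matrix α α 𝕜}
    (hA : A.IsHermitian) : (cfc f (A.submatrix e e)).trace = (cfc f A).trace := by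
  rw [cfc_submatrix_equiv e f hA]
  exact e.sum_comp fun i => cfc f A i i

theorem cfc_half_smul {f : ℝ → ℝ} (hf : ∀ x, f (2 * x) = 2 * f x) {A : Matrix α α 𝕜}
    (hA : A.IsHermitian) : cfc f ((1 / 2 : ℝ) • A) = (1 / 2 : ℝ) • cfc f A := by
  have hf' : (fun x => f (1 / 2 * x)) = fun x => 1 / 2 * f x := by
    ext x
    linarith [(congrArg f (by ring : x = 2 * (1 / 2 * x))).trans (hf _)]
  calc cfc f ((1 / 2 : ℝ) • A)
      = cfc (fun x => f (1 / 2 * x)) A :=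
        (cfc_comp_const_mul _ f A ((A.finite_real_spectrum.image _).continuousOn f) hA).symm
    _ = cfc (fun x => 1 / 2 * f x) A := by rw [hf']
    _ = (1 / 2 : ℝ) • cfc f A := cfc_const_mul _ f A (continuousOn_spectrum A f)

theorem absEigSum_eq_re_trace_cfc (A : Matrix α α ℂ) :
    absEigSum A = (cfc (fun x : ℝ => |x|) A).trace.re := by
  by_cases hA : A.IsHermitian
  · simp [absEigSum, hA, trace_cfc_eq_sum_eigenvalues hA]
  · simp [absEigSum, hA, cfc_apply_of_not_predicate (R := ℝ) (p := IsSelfAdjoint) A hA]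

theorem negEig_eq_re_trace_cfc (A : Matrix α α ℂ) :
    negEig A = (cfc (fun x : ℝ => max 0 (-x)) A).trace.re := by
  by_cases hA : A.IsHermitian
  · simp only [negEig, hA, dif_pos, trace_cfc_eq_sum_eigenvalues hA, Complex.re_sum]
    rfl
  · simp [negEig, hA, cfc_apply_of_not_predicate (R := ℝ) (p := IsSelfAdjoint) A hA]

end FunctionalCalculus

section RealPart

variable {κ α : Type*}

/-- The entrywise real part of `q ⊗ σ`, kept as a complex matrix. It models the real embedding
with all `Fin 2` indices regrouped into the single index `κ`. -/
noncomputable def reKronecker (q : Matrix κ κ ℂ) (σ : Matrix α α ℂ) :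
    Matrix (κ × α) (κ × α) ℂ :=
  (q ⊗ₖ σ).map fun z => (z.re : ℂ)

theorem isHermitian_reKronecker {q : Matrix κ κ ℂ} {σ : Matrix α α ℂ} (hq : q.IsHermitian)
    (hσ : σ.IsHermitian) : (reKronecker q σ).IsHermitian := by
  refine IsHermitian.map (f := fun z : ℂ => (z.re : ℂ)) ?_ fun z => by simp
  rw [IsHermitian, conjTranspose_kronecker, hq.eq, hσ.eq]

theorem reKronecker_one_eq_submatrix [DecidableEq κ] [Unique κ] [Subsingleton α]
    {σ : Matrix α α ℂ} (hσ : σ.IsHermitian) :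
    reKronecker (1 : Matrix κ κ ℂ) σ =
      σ.submatrix (Equiv.uniqueProd α κ) (Equiv.uniqueProd α κ) := by
  ext ⟨a, i⟩ ⟨b, j⟩
  obtain rfl := Subsingleton.elim a b
  obtain rfl := Subsingleton.elim i j
  simpa [reKronecker] using hσ.coe_re_apply_self i

variable [Fintype κ] [Fintype α]

theorem trace_reKronecker (q : Matrix κ κ ℂ) (σ : Matrix α α ℂ) :
    (reKronecker q σ).trace = (q.trace * σ.trace).re := by
  rw [← trace_kronecker]
  simp [reKronecker, trace]

theorem isStarProjection_transpose {q : Matrix κ κ ℂ} (hq : IsStarProjection q) :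
    IsStarProjection qᵀ where
  isIdempotentElem := by rw [IsIdempotentElem, ← transpose_mul, hq.isIdempotentElem.eq]
  isSelfAdjoint := IsHermitian.transpose (A := q) hq.isSelfAdjoint

theorem transpose_mul_self_eq_zero {q : Matrix κ κ ℂ} (hq : IsStarProjection q)
    (horth : q * qᵀ = 0) : qᵀ * q = 0 := by
  have hq' : q.IsHermitian := hq.isSelfAdjoint
  simpa [hq'.transpose.eq, hq'.eq] using congrArg conjTranspose horth

/-- The map `σ ↦ q ⊗ σ + q̄ ⊗ σ̄ = 2 Re (q ⊗ σ)` as a `*`-homomorphism, for a projection `q`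
orthogonal to its conjugate `q̄ = qᵀ`. It is only real-linear, because of `σ̄`, and not unital. -/
noncomputable def twiceReKronecker {q : Matrix κ κ ℂ} (hq : IsStarProjection q)
    (horth : q * qᵀ = 0) : Matrix α α ℂ →⋆ₙₐ[ℝ] Matrix (κ × α) (κ × α) ℂ where
  toFun σ := q ⊗ₖ σ + qᵀ ⊗ₖ σ.map (starRingEnd ℂ)
  map_smul' r σ := by
    have hconj : (r • σ).map (starRingEnd ℂ) = r • σ.map (starRingEnd ℂ) :=
      Matrix.map_smul _ r (Complex.conjAe.toLinearMap.map_smul r) σ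
    rw [hconj, kronecker_smul, kronecker_smul, ← smul_add]
    rfl
  map_zero' := by simp
  map_add' σ τ := by
    simp only [Matrix.map_add _ (map_add _), kronecker_add]
    abel
  map_mul' σ τ := by
    simp only [Matrix.map_mul, add_mul, mul_add, ← mul_kronecker_mul, horth,
      transpose_mul_self_eq_zero hq horth, hq.isIdempotentElem.eq,
      (isStarProjection_transpose hq).isIdempotentElem.eq, zero_kronecker, add_zero, zero_add]
  map_star' σ := by
    have hq' : q.IsHermitian := hq.isSelfAdjoint
    simp only [star_eq_conjTranspose, conjTranspose_add, conjTranspose_kronecker, hq'.eq,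
      hq'.transpose.eq]
    rfl

theorem reKronecker_eq_half_smul {q : Matrix κ κ ℂ} (hq : IsStarProjection q)
    (horth : q * qᵀ = 0) (σ : Matrix α α ℂ) :
    reKronecker q σ = (1 / 2 : ℝ) • twiceReKronecker hq horth σ := by
  ext i j
  have hqij : q j.1 i.1 = star (q i.1 j.1) :=
    (IsHermitian.apply (A := q) hq.isSelfAdjoint _ _).symm
  have hadd := Complex.add_conj (q i.1 j.1 * σ i.2 j.2)
  simp only [map_mul] at hadd
  simp [reKronecker, twiceReKronecker, hqij, hadd]

variable [DecidableEq κ] [DecidableEq α]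

theorem cfc_reKronecker {q : Matrix κ κ ℂ} (hq : IsStarProjection q) (horth : q * qᵀ = 0)
    {f : ℝ → ℝ} (hf : ∀ x, f (2 * x) = 2 * f x) {σ : Matrix α α ℂ} (hσ : σ.IsHermitian) :
    cfc f (reKronecker q σ) = reKronecker q (cfc f σ) := by
  have hf0 : f 0 = 0 := by simpa [two_mul] using hf 0
  have hφσ : (twiceReKronecker hq horth σ).IsHermitian :=
    hσ.isSelfAdjoint.map (twiceReKronecker hq horth)
  rw [reKronecker_eq_half_smul hq horth, reKronecker_eq_half_smul hq horth, cfc_half_smul hf hφσ,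
    map_cfc_of_map_zero _ hf0 hσ]

end RealPart

section MultipartiteTensor

variable {n : ℕ} {ι : Fin n → Type*}

theorem conjTranspose_npTensor (A : (s : Fin n) → Matrix (ι s) (ι s) ℂ) :
    (npTensor A)ᴴ = npTensor fun s => (A s)ᴴ := by
  ext i j
  simp [npTensor]

theorem ptm_npTensor (m : Finset (Fin n)) (A : (s : Fin n) → Matrix (ι s) (ι s) ℂ) :
    ptm m (npTensor A) = npTensor fun s => if s ∈ m then (A s)ᵀ else A s := by
  ext i j
  simp only [ptm, npTensor]
  refine Finset.prod_congr rfl fun s _ => ?_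
  split_ifs <;> rfl

theorem isHermitian_ptm (m : Finset (Fin n)) {ρ : Matrix ((s : Fin n) → ι s) ((s : Fin n) → ι s) ℂ}
    (hρ : ρ.IsHermitian) : (ptm m ρ).IsHermitian :=
  .ext fun _ _ => hρ.apply _ _

variable [∀ s, Fintype (ι s)]

theorem npTensor_mul (A B : (s : Fin n) → Matrix (ι s) (ι s) ℂ) :
    npTensor A * npTensor B = npTensor fun s => A s * B s := by
  ext i j
  simp only [npTensor, mul_apply, ← Finset.prod_mul_distrib]
  rw [Finset.prod_univ_sum, Fintype.piFinset_univ]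

theorem trace_npTensor (A : (s : Fin n) → Matrix (ι s) (ι s) ℂ) :
    (npTensor A).trace = ∏ s, (A s).trace := by
  simp only [npTensor, trace, diag]
  rw [Finset.prod_univ_sum, Fintype.piFinset_univ]

theorem isStarProjection_npTensor {A : (s : Fin n) → Matrix (ι s) (ι s) ℂ}
    (hA : ∀ s, IsStarProjection (A s)) : IsStarProjection (npTensor A) where
  isIdempotentElem := by
    rw [IsIdempotentElem, npTensor_mul]
    exact congrArg npTensor (funext fun s => (hA s).isIdempotentElem)
  isSelfAdjoint := (conjTranspose_npTensor A).trans <|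
    congrArg npTensor (funext fun s => (hA s).isSelfAdjoint)

theorem npTensor_mul_transpose_eq_zero {A : (s : Fin n) → Matrix (ι s) (ι s) ℂ} {s : Fin n}
    (hA : A s * (A s)ᵀ = 0) : npTensor A * (npTensor A)ᵀ = 0 := by
  refine (npTensor_mul A fun s => (A s)ᵀ).trans ?_
  ext i j
  exact Finset.prod_eq_zero (Finset.mem_univ s) (congrFun (congrFun hA (i s)) (j s))

end MultipartiteTensor

section Projector

/-- The rank-one projection `(1 - iY) / 2` that the real embedding tensors onto each party. -/
noncomputable def halfOneMinusIY : Matrix (Fin 2) (Fin 2) ℂ := (1 / 2 : ℂ) • oneMinusIY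

theorem trace_halfOneMinusIY : halfOneMinusIY.trace = 1 := by
  rw [halfOneMinusIY, trace_smul, oneMinusIY, trace_fin_two_of]
  norm_num

theorem oneMinusIY_mul_self : oneMinusIY * oneMinusIY = (2 : ℂ) • oneMinusIY := by
  simp [oneMinusIY, one_add_one_eq_two, two_mul]

theorem oneMinusIY_mul_transpose : oneMinusIY * oneMinusIYᵀ = 0 := by
  ext i j
  fin_cases i <;> fin_cases j <;> simp [oneMinusIY, mul_apply]

theorem isStarProjection_halfOneMinusIY : IsStarProjection halfOneMinusIY where
  isIdempotentElem := by
    rw [IsIdempotentElem, halfOneMinusIY, smul_mul_smul_comm, oneMinusIY_mul_self, smul_smul]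
    norm_num
  isSelfAdjoint := by
    rw [isSelfAdjoint_iff, halfOneMinusIY, star_smul, star_eq_conjTranspose,
      isHermitian_oneMinusIY.eq]
    simp

theorem halfOneMinusIY_mul_transpose : halfOneMinusIY * halfOneMinusIYᵀ = 0 := by
  rw [halfOneMinusIY, transpose_smul, smul_mul_smul_comm, oneMinusIY_mul_transpose, smul_zero]

variable {n : ℕ} (m : Finset (Fin n))

/-- The partial transpose of `⨂ₛ (1 - iY) / 2`. Up to regrouping indices, the real part of its
tensor product with `ρ^{T_m}` is `ρ̂^{T_m}`. -/
noncomputable def ptProjector : Matrix (Fin n → Fin 2) (Fin n → Fin 2) ℂ :=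
  ptm m (npTensor fun _ => halfOneMinusIY)

theorem isStarProjection_ptProjector : IsStarProjection (ptProjector m) := by
  rw [ptProjector, ptm_npTensor]
  refine isStarProjection_npTensor fun s => ?_
  split_ifs
  · exact isStarProjection_transpose isStarProjection_halfOneMinusIY
  · exact isStarProjection_halfOneMinusIY

theorem trace_ptProjector : (ptProjector m).trace = 1 := by
  rw [ptProjector, ptm_npTensor, trace_npTensor]
  refine Finset.prod_eq_one fun s _ => ?_
  split_ifs <;> simp only [trace_transpose, trace_halfOneMinusIY]

theorem ptProjector_eq_one (m : Finset (Fin 0)) : ptProjector m = 1 := by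
  ext i j
  obtain rfl := Subsingleton.elim i j
  simp [ptProjector, ptm, npTensor]

theorem ptProjector_mul_transpose [NeZero n] : ptProjector m * (ptProjector m)ᵀ = 0 := by
  rw [ptProjector, ptm_npTensor]
  refine npTensor_mul_transpose_eq_zero (s := 0) ?_
  split_ifs
  · exact transpose_mul_self_eq_zero isStarProjection_halfOneMinusIY halfOneMinusIY_mul_transpose
  · exact halfOneMinusIY_mul_transpose

end Projector

section Embedding

variable {n : ℕ} {ι : Fin n → Type*}

theorem ptm_stateEmbed (m : Finset (Fin n))
    (ρ : Matrix ((s : Fin n) → ι s) ((s : Fin n) → ι s) ℂ) :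
    ptm m (stateEmbed ρ) = (reKronecker (ptProjector m) (ptm m ρ)).submatrix
      (Equiv.arrowProdEquivProdArrow _ _ _) (Equiv.arrowProdEquivProdArrow _ _ _) := by
  ext r c
  simp only [ptm, stateEmbed, reKronecker, ptProjector, npTensor, halfOneMinusIY, submatrix_apply,
    Equiv.arrowProdEquivProdArrow_apply, map_apply, kronecker_apply, Matrix.smul_apply, smul_eq_mul,
    Finset.prod_mul_distrib, Finset.prod_const, Finset.card_univ, Fintype.card_fin,
    apply_ite Prod.fst, apply_ite Prod.snd]
  rw [← Complex.re_ofReal_mul, mul_assoc]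
  simp

variable [∀ s, Fintype (ι s)] [∀ s, DecidableEq (ι s)]

theorem re_trace_cfc_reKronecker_ptProjector (m : Finset (Fin n)) {f : ℝ → ℝ}
    (hf : ∀ x, f (2 * x) = 2 * f x)
    {σ : Matrix ((s : Fin n) → ι s) ((s : Fin n) → ι s) ℂ} (hσ : σ.IsHermitian) :
    (cfc f (reKronecker (ptProjector m) σ)).trace.re = (cfc f σ).trace.re := by
  obtain rfl | hn := eq_or_ne n 0
  -- With no parties the projector equals its conjugate, but all matrices are `1 × 1` and real.
  · rw [ptProjector_eq_one, reKronecker_one_eq_submatrix hσ, trace_cfc_submatrix_equiv _ f hσ]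
  · have : NeZero n := ⟨hn⟩
    rw [cfc_reKronecker (isStarProjection_ptProjector m) (ptProjector_mul_transpose m) hf hσ,
      trace_reKronecker, trace_ptProjector, one_mul, Complex.ofReal_re]

theorem re_trace_cfc_ptm_stateEmbed (m : Finset (Fin n)) {f : ℝ → ℝ}
    (hf : ∀ x, f (2 * x) = 2 * f x)
    {ρ : Matrix ((s : Fin n) → ι s) ((s : Fin n) → ι s) ℂ} (hρ : ρ.IsHermitian) :
    (cfc f (ptm m (stateEmbed ρ))).trace.re = (cfc f (ptm m ρ)).trace.re := by
  have hσ := isHermitian_ptm m hρ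
  rw [ptm_stateEmbed, trace_cfc_submatrix_equiv _ f
    (isHermitian_reKronecker (isStarProjection_ptProjector m).isSelfAdjoint hσ),
    re_trace_cfc_reKronecker_ptProjector m hf hσ]

end Embedding

/-- the real embedding preserves the trace norm of the partial transpose
across every bipartition m, and hence preserves the negativity N_m. -/
theorem realEmbedding_preserves_negativity
    {n : ℕ} {ι : Fin n → Type*} [∀ s, Fintype (ι s)] [∀ s, Nonempty (ι s)]
    [∀ s, DecidableEq (ι s)]
    (ρ : Matrix ((s : Fin n) → ι s) ((s : Fin n) → ι s) ℂ) (hρ : ρ.IsHermitian)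
    (m : Finset (Fin n)) :
    absEigSum (ptm m (stateEmbed ρ)) = absEigSum (ptm m ρ) ∧
    negEig (ptm m (stateEmbed ρ)) = negEig (ptm m ρ) := by
  constructor
  · rw [absEigSum_eq_re_trace_cfc, absEigSum_eq_re_trace_cfc]
    exact re_trace_cfc_ptm_stateEmbed m (fun x => by rw [abs_mul, abs_two]) hρ
  · rw [negEig_eq_re_trace_cfc, negEig_eq_re_trace_cfc]
    refine re_trace_cfc_ptm_stateEmbed m (fun x => ?_) hρ
    rw [mul_max_of_nonneg _ _ zero_le_two, mul_zero, mul_neg]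
end

section
/- First half of Proposition 2 (tensor-product PPT representation yields the commutative PPT condition): let ρ be a complex matrix indexed by (ι_A × ι_B) × (ι_A × ι_B) with ρ = ρ^{T_A}, let A : α → Matrix ι_A ι_A ℂ be a family of symmetric matrices ((A i)ᵀ = A i for all i), and let B be any complex matrix on ι_B. Then for every list s : List α, tr[ρ·(A(s) ⊗ B)] = tr[ρ·(A(s.reverse) ⊗ B)]. In particular, if P is a bipartite distribution with a tensor-product PPT quantum representation — P(i,j) = tr[ρ·(A_i ⊗ B_j)] with ρ a real PPT-invariant state (ρ = ρᵀ = ρ^{T_A} positive semidefinite of trace 1) and real symmetric A_i, B_j — then the commuting operators Ã_i = A_i ⊗ 1 and B̃_j = 1 ⊗ B_j together with ρ form a commutative PPT quantum representation of P. -/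
open Matrix
open scoped Kronecker ComplexOrder

/-- Ordered product of the matrices A along the list s. -/
noncomputable def listProd {α ι : Type*} [Fintype ι] [DecidableEq ι]
    (A : α → Matrix ι ι ℂ) (s : List α) : Matrix ι ι ℂ :=
  (s.map A).prod

/-!
The partial transpose is self-adjoint for the pairing `(X, Y) ↦ tr (X * Y)`, and it sends `M ⊗ B` to
`Mᵀ ⊗ B`. A state that it fixes therefore cannot distinguish `M ⊗ B` from `Mᵀ ⊗ B`, and transposing
a word in symmetric matrices reverses it.
-/

section PartialTranspose

variable {l m n p R : Type*}

/-- The partial transpose `ρ ↦ ρ^{T_A}` on the first tensor factor, extending `ptA` to rectangular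
matrices with arbitrary entries. -/
def leftPartialTranspose (X : Matrix (l × n) (m × p) R) : Matrix (m × n) (l × p) R :=
  Matrix.of fun i j => X (j.1, i.2) (i.1, j.2)

theorem leftPartialTranspose_kronecker [Mul R] (M : Matrix l m R) (B : Matrix n p R) :
    leftPartialTranspose (M ⊗ₖ B) = Mᵀ ⊗ₖ B :=
  rfl

theorem trace_leftPartialTranspose_mul [NonUnitalNonAssocSemiring R]
    [Fintype l] [Fintype m] [Fintype n] [Fintype p]
    (X : Matrix (l × n) (m × p) R) (Y : Matrix (l × p) (m × n) R) :
    trace (leftPartialTranspose X * Y) = trace (X * leftPartialTranspose Y) := by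
  simp only [trace, diag_apply, mul_apply, Fintype.sum_prod_type_right, leftPartialTranspose,
    of_apply]
  -- Both sides are one sum over four indices; the `l` and `m` indices play exchanged roles.
  refine Fintype.sum_congr _ _ fun b => ?_
  rw [Finset.sum_comm]
  conv_rhs => rw [Finset.sum_comm]
  exact Fintype.sum_congr _ _ fun d => Finset.sum_comm

theorem trace_mul_transpose_kronecker_of_leftPartialTranspose_eq [NonUnitalNonAssocSemiring R]
    [Fintype m] [Fintype n] {ρ : Matrix (m × n) (m × n) R} (hρ : leftPartialTranspose ρ = ρ)
    (M : Matrix m m R) (B : Matrix n n R) :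
    trace (ρ * (Mᵀ ⊗ₖ B)) = trace (ρ * (M ⊗ₖ B)) := by
  rw [← leftPartialTranspose_kronecker, ← trace_leftPartialTranspose_mul, hρ]

end PartialTranspose

section Words

variable {α m n R : Type*} [CommSemiring R] [Fintype m] [DecidableEq m]

theorem transpose_list_prod_map_of_isSymm {A : α → Matrix m m R} (hA : ∀ i, (A i).IsSymm)
    (s : List α) : (s.map A).prodᵀ = (s.reverse.map A).prod := by
  have hAT : transpose ∘ A = A := funext hA
  rw [transpose_list_prod, List.map_map, hAT, List.map_reverse]

theorem trace_mul_list_prod_map_kronecker_reverse [Fintype n]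
    {ρ : Matrix (m × n) (m × n) R} (hρ : leftPartialTranspose ρ = ρ)
    {A : α → Matrix m m R} (hA : ∀ i, (A i).IsSymm) (B : Matrix n n R) (s : List α) :
    trace (ρ * ((s.map A).prod ⊗ₖ B)) = trace (ρ * ((s.reverse.map A).prod ⊗ₖ B)) := by
  rw [← transpose_list_prod_map_of_isSymm hA,
    trace_mul_transpose_kronecker_of_leftPartialTranspose_eq hρ]

variable [Fintype n] [DecidableEq n]

theorem list_prod_map_kronecker (A : α → Matrix m m R) (B : α → Matrix n n R) (s : List α) :
    (s.map fun i => A i ⊗ₖ B i).prod = (s.map A).prod ⊗ₖ (s.map B).prod := by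
  induction s with
  | nil => simp
  | cons a s ih => simp only [List.map_cons, List.prod_cons, ih, mul_kronecker_mul]

theorem list_prod_map_kronecker_one (A : α → Matrix m m R) (s : List α) :
    (s.map fun i => A i ⊗ₖ (1 : Matrix n n R)).prod = (s.map A).prod ⊗ₖ 1 := by
  simp [list_prod_map_kronecker]

theorem list_prod_map_one_kronecker (B : α → Matrix n n R) (s : List α) :
    (s.map fun j => (1 : Matrix m m R) ⊗ₖ B j).prod = 1 ⊗ₖ (s.map B).prod := by
  simp [list_prod_map_kronecker]

end Words

section LocalOperators

variable {m n R : Type*} [CommSemiring R] [Fintype m] [DecidableEq m] [Fintype n] [DecidableEq n]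

theorem kronecker_one_mul_one_kronecker (M : Matrix m m R) (B : Matrix n n R) :
    (M ⊗ₖ (1 : Matrix n n R)) * ((1 : Matrix m m R) ⊗ₖ B) = M ⊗ₖ B := by
  rw [← mul_kronecker_mul, mul_one, one_mul]

theorem commute_kronecker_one_one_kronecker (M : Matrix m m R) (B : Matrix n n R) :
    Commute (M ⊗ₖ (1 : Matrix n n R)) ((1 : Matrix m m R) ⊗ₖ B) := by
  rw [commute_iff_eq, kronecker_one_mul_one_kronecker, ← mul_kronecker_mul, one_mul, mul_one]

end LocalOperators

theorem tensorProduct_PPT_gives_commutative_PPT_general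
    {ιA ιB α β R : Type*} [CommSemiring R] [Fintype ιA] [Fintype ιB]
    [DecidableEq ιA] [DecidableEq ιB]
    (ρ : Matrix (ιA × ιB) (ιA × ιB) R) (hρ : leftPartialTranspose ρ = ρ)
    (A : α → Matrix ιA ιA R) (hA : ∀ i, (A i).IsSymm) :
    (∀ (B : Matrix ιB ιB R) (s : List α),
      trace (ρ * ((s.map A).prod ⊗ₖ B)) = trace (ρ * ((s.reverse.map A).prod ⊗ₖ B))) ∧
    (∀ (B : β → Matrix ιB ιB R) (P : α → β → R),
      (∀ i j, P i j = trace (ρ * (A i ⊗ₖ B j))) →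
        (∀ i j, Commute (A i ⊗ₖ (1 : Matrix ιB ιB R)) ((1 : Matrix ιA ιA R) ⊗ₖ B j)) ∧
        (∀ i j, P i j =
          trace (ρ * ((A i ⊗ₖ (1 : Matrix ιB ιB R)) * ((1 : Matrix ιA ιA R) ⊗ₖ B j)))) ∧
        (∀ (s : List α) (t : List β),
          trace (ρ * (s.map fun i => A i ⊗ₖ (1 : Matrix ιB ιB R)).prod *
              (t.map fun j => (1 : Matrix ιA ιA R) ⊗ₖ B j).prod) =
            trace (ρ * (s.reverse.map fun i => A i ⊗ₖ (1 : Matrix ιB ιB R)).prod *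
              (t.map fun j => (1 : Matrix ιA ιA R) ⊗ₖ B j).prod))) := by
  have trace_reverse := trace_mul_list_prod_map_kronecker_reverse hρ hA
  refine ⟨trace_reverse, fun B P hP => ⟨fun i j => ?commute, fun i j => ?represents,
    fun s t => ?reversal⟩⟩
  case commute => exact commute_kronecker_one_one_kronecker (A i) (B j)
  case represents => rw [kronecker_one_mul_one_kronecker, hP]
  case reversal =>
    simp only [list_prod_map_kronecker_one, list_prod_map_one_kronecker, mul_assoc,
      kronecker_one_mul_one_kronecker]
    exact trace_reverse _ s

/-- first half of Proposition 2: for a PPT-invariant ρ and symmetric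
matrices A i, traces of products are invariant under reversing the A-word; in particular
a tensor-product PPT quantum representation of a distribution P yields a commutative PPT
quantum representation of P via Ã i = A i ⊗ 1 and B̃ j = 1 ⊗ B j. -/
theorem tensorProduct_PPT_gives_commutative_PPT
    {ιA ιB α β : Type*} [Fintype ιA] [Fintype ιB] [Nonempty ιA] [Nonempty ιB]
    [DecidableEq ιA] [DecidableEq ιB]
    (ρ : Matrix (ιA × ιB) (ιA × ιB) ℂ) (hpt : ptA ρ = ρ)
    (A : α → Matrix ιA ιA ℂ) (hAsym : ∀ i, (A i)ᵀ = A i) :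
    (∀ (B : Matrix ιB ιB ℂ) (s : List α),
      Matrix.trace (ρ * ((listProd A s) ⊗ₖ B)) =
        Matrix.trace (ρ * ((listProd A s.reverse) ⊗ₖ B))) ∧
    (∀ (B : β → Matrix ιB ιB ℂ), (∀ j, (B j)ᵀ = B j) →
      (∀ i p q, ((A i) p q).im = 0) → (∀ j p q, ((B j) p q).im = 0) →
      ρ.PosSemidef → Matrix.trace ρ = 1 → ρᵀ = ρ → (∀ p q, (ρ p q).im = 0) →
      ∀ (P : α → β → ℝ), (∀ i j, (P i j : ℂ) = Matrix.trace (ρ * ((A i) ⊗ₖ (B j)))) →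
        (∀ i j, ((A i) ⊗ₖ (1 : Matrix ιB ιB ℂ)) * ((1 : Matrix ιA ιA ℂ) ⊗ₖ (B j)) =
          ((1 : Matrix ιA ιA ℂ) ⊗ₖ (B j)) * ((A i) ⊗ₖ (1 : Matrix ιB ιB ℂ))) ∧
        (∀ i j, (P i j : ℂ) = Matrix.trace
          (ρ * (((A i) ⊗ₖ (1 : Matrix ιB ιB ℂ)) * ((1 : Matrix ιA ιA ℂ) ⊗ₖ (B j))))) ∧
        (∀ (s : List α) (t : List β),
          Matrix.trace (ρ * listProd (fun i => (A i) ⊗ₖ (1 : Matrix ιB ιB ℂ)) s *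
              listProd (fun j => (1 : Matrix ιA ιA ℂ) ⊗ₖ (B j)) t) =
            Matrix.trace (ρ * listProd (fun i => (A i) ⊗ₖ (1 : Matrix ιB ιB ℂ)) s.reverse *
              listProd (fun j => (1 : Matrix ιA ιA ℂ) ⊗ₖ (B j)) t))) :=
  have general := tensorProduct_PPT_gives_commutative_PPT_general ρ hpt A hAsym
  ⟨general.1, fun B _ _ _ _ _ _ _ P hP => general.2 B (fun i j => P i j) hP⟩
end

section
/- Proposition 2, converse direction (finite dimensions): let ρ̃ be a positive semidefinite trace-1 complex matrix on a finite nonempty type ι with real entries, and let Ã : α → Matrix ι ι ℂ and B̃ : β → Matrix ι ι ℂ be families of matrices with real entries that are symmetric ((Ã i)ᵀ = Ã i, (B̃ j)ᵀ = B̃ j), idempotent ((Ã i)² = Ã i, (B̃ j)² = B̃ j), and satisfy (Ã i)·(B̃ j) = (B̃ j)·(Ã i) for all i, j. Assume the commutative PPT condition: for all lists s : List α and t : List β, tr[ρ̃·Ã(s)·B̃(t)] = tr[ρ̃·Ã(s.reverse)·B̃(t)]. Then there exist finite nonempty types ι_A, ι_B, a bipartite quantum state ρ on ι_A × ι_B with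 ρ^{T_A} positive semidefinite, and Hermitian idempotent matrices A : α → Matrix ι_A ι_A ℂ, B : β → Matrix ι_B ι_B ℂ such that tr[ρ·(A i ⊗ B j)] = tr[ρ̃·(Ã i)·(B̃ j)] for all i, j. -/
/-!
Prescribe the moments `tr[ρ A(s) B(t)]` on the words `A(s) ⊗ B(t)`. They extend to a linear
functional on the star algebra spanned by the words, and commutation of the `A i` with the `B j`
makes it nonnegative on squares. Trace duality represents it by an element `σ` of that algebra.
An element of a matrix star algebra that is nonnegative against the squares of the algebra is
positive semidefinite: it is Hermitian by polarization, and each of its eigenvalues `z` has an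
eigenvector `c` inside the algebra, `c * σ = z • c`.

The partial transpose of `σ` lies in the star algebra spanned by the words `Aᵀ(s) ⊗ B(t)`, where its
moments are `tr[ρ A(s.reverse) B(t)]`. The PPT condition says that these are again
`tr[ρ A(s) B(t)]`, so the same argument shows that it is positive semidefinite as well.
-/

open Matrix
open scoped Kronecker ComplexOrder

/-- The minimal polynomial of `x` factors as `(X - z) * q`, and the eigenvector is `q(x)`. -/
lemma exists_mem_adjoin_mul_eq_smul {K R : Type*} [Field K] [Ring R] [Nontrivial R] [Algebra K R]
    {x : R} (hx : IsIntegral K x) {z : K} (hz : z ∈ spectrum K x) :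
    ∃ c ∈ Algebra.adjoin K {x}, c ≠ 0 ∧ c * x = z • c := by
  have hroot : (minpoly K x).IsRoot z := by
    have := spectrum.subset_polynomial_aeval x (minpoly K x) ⟨z, hz, rfl⟩
    rwa [minpoly.aeval, spectrum.zero_eq, Set.mem_singleton_iff] at this
  obtain ⟨q, hq⟩ := Polynomial.dvd_iff_isRoot.2 hroot
  have hq0 : q ≠ 0 := right_ne_zero_of_mul (hq ▸ minpoly.ne_zero hx)
  refine ⟨Polynomial.aeval x q, Polynomial.aeval_mem_adjoin_singleton K x, fun h ↦ ?_, ?_⟩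
  · have hdeg := minpoly.degree_le_of_ne_zero K x hq0 h
    rw [hq, Polynomial.degree_mul, Polynomial.degree_X_sub_C,
      Polynomial.degree_eq_natDegree hq0] at hdeg
    norm_cast at hdeg
    lia
  · have := minpoly.aeval K x
    rw [hq, mul_comm, map_mul, map_sub, Polynomial.aeval_X, Polynomial.aeval_C, mul_sub,
      sub_eq_zero] at this
    rw [this, Algebra.smul_def, Algebra.commutes]

section TraceForm

variable {n 𝕜 : Type*} [Fintype n] [RCLike 𝕜]

lemma map_conjTranspose_mul_self_nonneg_of_mem_span {m κ : Type*} [Fintype m]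
    {ρ : Matrix m m 𝕜} (hρ : ρ.PosSemidef) {u : κ → Matrix m m 𝕜} {v : κ → Matrix n n 𝕜}
    {φ : Matrix n n 𝕜 →ₗ[𝕜] 𝕜} (h : ∀ k l, φ ((v k)ᴴ * v l) = trace (ρ * ((u k)ᴴ * u l)))
    {d : Matrix n n 𝕜} (hd : d ∈ Submodule.span 𝕜 (Set.range v)) : 0 ≤ φ (dᴴ * d) := by
  obtain ⟨a, rfl⟩ := Finsupp.mem_span_range_iff_exists_finsupp.1 hd
  let y := a.sum fun k z ↦ z • u k
  have hy : φ ((a.sum fun k z ↦ z • v k)ᴴ * a.sum fun k z ↦ z • v k) = trace (ρ * (yᴴ * y)) := by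
    simp only [y, Finsupp.sum, conjTranspose_sum, conjTranspose_smul, Finset.sum_mul,
      Finset.mul_sum, smul_mul_assoc, mul_smul_comm, map_sum, map_smul, trace_sum, trace_smul, h]
  rw [hy, ← mul_assoc, trace_mul_comm, ← mul_assoc]
  exact (hρ.mul_mul_conjTranspose_same y).trace_nonneg

variable [DecidableEq n]

lemma posSemidef_of_forall_mem_trace_mul_nonneg {S : Subalgebra 𝕜 (Matrix n n 𝕜)}
    {M : Matrix n n 𝕜} (hM : M.IsHermitian) (hMS : M ∈ S)
    (h : ∀ c ∈ S, 0 ≤ trace (M * (cᴴ * c))) : M.PosSemidef := by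
  refine posSemidef_iff_isHermitian_and_spectrum_nonneg.2 ⟨hM, fun z hz ↦ ?_⟩
  have : Nontrivial (Matrix n n 𝕜) :=
    not_subsingleton_iff_nontrivial.1 fun _ ↦ by simp at hz
  obtain ⟨c, hc, hc0, hcM⟩ := exists_mem_adjoin_mul_eq_smul (Algebra.IsIntegral.isIntegral M) hz
  have hcS : c ∈ S := Algebra.adjoin_le (Set.singleton_subset_iff.2 hMS) hc
  have htrace : trace (M * (cᴴ * c)) = z * trace (c * cᴴ) := by
    rw [← mul_assoc, trace_mul_comm, ← mul_assoc, hcM, smul_mul_assoc, trace_smul, smul_eq_mul]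
  have hpos : 0 < trace (c * cᴴ) :=
    (posSemidef_self_mul_conjTranspose c).trace_nonneg.lt_of_ne'
      (mt trace_mul_conjTranspose_self_eq_zero_iff.1 hc0)
  refine le_of_mul_le_mul_right (a := trace (c * cᴴ)) ?_ hpos
  simpa only [zero_mul, htrace] using h c hcS

lemma eq_zero_of_forall_mem_trace_mul_eq_zero {S : StarSubalgebra 𝕜 (Matrix n n 𝕜)}
    {x : Matrix n n 𝕜} (hx : x ∈ S) (h : ∀ c ∈ S, trace (x * c) = 0) : x = 0 :=
  trace_mul_conjTranspose_self_eq_zero_iff.1 (h _ (star_mem hx))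

lemma exists_mem_trace_mul_eq (S : StarSubalgebra 𝕜 (Matrix n n 𝕜))
    (φ : Matrix n n 𝕜 →ₗ[𝕜] 𝕜) : ∃ σ ∈ S, ∀ c ∈ S, trace (σ * c) = φ c := by
  let pairing : S →ₗ[𝕜] Module.Dual 𝕜 S :=
    ((LinearMap.mul 𝕜 (Matrix n n 𝕜)).compr₂ (traceLinearMap n 𝕜 𝕜)).domRestrict₁₂
      S.toSubalgebra.toSubmodule S.toSubalgebra.toSubmodule
  have hinj : Function.Injective pairing :=
    (injective_iff_map_eq_zero _).2 fun x hx ↦ Subtype.ext <|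
      eq_zero_of_forall_mem_trace_mul_eq_zero x.2 fun c hc ↦ LinearMap.congr_fun hx ⟨c, hc⟩
  have : FiniteDimensional 𝕜 S := FiniteDimensional.finiteDimensional_submodule
    (Subalgebra.toSubmodule S.toSubalgebra)
  have hsurj := (LinearMap.injective_iff_surjective_of_finrank_eq_finrank
    (Subspace.dual_finrank_eq (K := 𝕜) (V := S)).symm).1 hinj
  obtain ⟨σ, hσ⟩ := hsurj (φ ∘ₗ S.toSubalgebra.toSubmodule.subtype)
  exact ⟨σ, σ.2, fun c hc ↦ LinearMap.congr_fun hσ ⟨c, hc⟩⟩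

lemma isHermitian_of_forall_mem_trace_mul_nonneg {S : StarSubalgebra ℂ (Matrix n n ℂ)}
    {M : Matrix n n ℂ} (hMS : M ∈ S) (h : ∀ c ∈ S, 0 ≤ trace (M * (cᴴ * c))) :
    M.IsHermitian := by
  set K := M - Mᴴ with hK
  have hKS : K ∈ S := sub_mem hMS (star_mem hMS)
  have hKstar : Kᴴ = -K := by simp [hK]
  have hzero : ∀ c ∈ S, trace (K * (cᴴ * c)) = 0 := fun c hc ↦ by
    have hreal : trace (Mᴴ * (cᴴ * c)) = trace (M * (cᴴ * c)) := by
      conv_rhs => rw [← (IsSelfAdjoint.of_nonneg (h c hc)).star_eq]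
      rw [← trace_conjTranspose, conjTranspose_mul, conjTranspose_mul, conjTranspose_conjTranspose,
        trace_mul_comm]
    rw [hK, sub_mul, trace_sub, hreal, sub_self]
  have hone : trace K = 0 := by simpa using hzero 1 (one_mem S)
  have hcube : trace (K * (K * K)) = 0 := by simpa [hKstar] using hzero K hKS
  -- `1 + I • K` is Hermitian, so its square `1 + 2 • I • K - K * K` isolates `trace (K * K)`.
  have hsq := hzero (1 + Complex.I • K) (add_mem (one_mem S) (S.smul_mem hKS _))
  have hnorm : trace (K * Kᴴ) = 0 := by
    simpa [hKstar, add_mul, mul_add, hone, hcube] using hsq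
  exact (sub_eq_zero.1 (trace_mul_conjTranspose_self_eq_zero_iff.1 hnorm)).symm

lemma exists_posSemidef_mem_trace_mul_eq (S : StarSubalgebra ℂ (Matrix n n ℂ))
    {φ : Matrix n n ℂ →ₗ[ℂ] ℂ} (hφ : ∀ c ∈ S, 0 ≤ φ (cᴴ * c)) :
    ∃ σ ∈ S, σ.PosSemidef ∧ ∀ c ∈ S, trace (σ * c) = φ c := by
  obtain ⟨σ, hσS, hσ⟩ := exists_mem_trace_mul_eq S φ
  have hpos : ∀ c ∈ S, 0 ≤ trace (σ * (cᴴ * c)) := fun c hc ↦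
    hσ _ (mul_mem (star_mem hc) hc) ▸ hφ c hc
  exact ⟨σ, hσS, posSemidef_of_forall_mem_trace_mul_nonneg (S := S.toSubalgebra)
    (isHermitian_of_forall_mem_trace_mul_nonneg hσS hpos) hσS hpos, hσ⟩

end TraceForm

section ListProd

variable {α β ι : Type*} [Fintype ι] [DecidableEq ι] {A : α → Matrix ι ι ℂ}

lemma listProd_append (A : α → Matrix ι ι ℂ) (s t : List α) :
    listProd A (s ++ t) = listProd A s * listProd A t := by
  simp [listProd]

lemma listProd_transpose (A : α → Matrix ι ι ℂ) (s : List α) :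
    (listProd A s)ᵀ = listProd (fun i ↦ (A i)ᵀ) s.reverse := by
  simp [listProd, transpose_list_prod, Function.comp_def]

lemma listProd_conjTranspose (hA : ∀ i, (A i).IsHermitian) (s : List α) :
    (listProd A s)ᴴ = listProd A s.reverse := by
  simp [listProd, conjTranspose_list_prod, Function.comp_def, fun i ↦ (hA i).eq]

lemma commute_listProd {B : β → Matrix ι ι ℂ} (h : ∀ i j, Commute (A i) (B j))
    (s : List α) (t : List β) : Commute (listProd A s) (listProd B t) :=
  Commute.list_prod_left _ _ <| List.forall_mem_map.2 fun i _ ↦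
    Commute.list_prod_right _ _ <| List.forall_mem_map.2 fun j _ ↦ h i j

end ListProd

section KroneckerWords

variable {α β m n : Type*} [Fintype m] [DecidableEq m] [Fintype n] [DecidableEq n]

/-- The tensor `A(s) ⊗ B(t)` of the operator words labelled by the pair `w = (s, t)`. -/
noncomputable def kroneckerWord (A : α → Matrix m m ℂ) (B : β → Matrix n n ℂ)
    (w : List α × List β) : Matrix (m × n) (m × n) ℂ :=
  listProd A w.1 ⊗ₖ listProd B w.2

/-- The star algebra generated by the words `A(s) ⊗ B(t)`, on which a state with prescribed
moments on words is to be constructed. For Hermitian families it is the linear span of the words,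
see `toSubmodule_wordAlgebra_eq_span`. -/
noncomputable def wordAlgebra (A : α → Matrix m m ℂ) (B : β → Matrix n n ℂ) :
    StarSubalgebra ℂ (Matrix (m × n) (m × n) ℂ) :=
  StarAlgebra.adjoin ℂ (Set.range (kroneckerWord A B))

variable {A : α → Matrix m m ℂ} {B : β → Matrix n n ℂ}

lemma kroneckerWord_mem_wordAlgebra (w : List α × List β) :
    kroneckerWord A B w ∈ wordAlgebra A B :=
  StarAlgebra.subset_adjoin ℂ _ ⟨w, rfl⟩

lemma kroneckerWord_mul (v w : List α × List β) :
    kroneckerWord A B v * kroneckerWord A B w = kroneckerWord A B (v.1 ++ w.1, v.2 ++ w.2) := by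
  simp only [kroneckerWord, ← mul_kronecker_mul, listProd_append]

lemma kroneckerWord_conjTranspose (hA : ∀ i, (A i).IsHermitian) (hB : ∀ j, (B j).IsHermitian)
    (w : List α × List β) :
    (kroneckerWord A B w)ᴴ = kroneckerWord A B (w.1.reverse, w.2.reverse) := by
  simp only [kroneckerWord, conjTranspose_kronecker, listProd_conjTranspose hA,
    listProd_conjTranspose hB]

lemma toSubmodule_wordAlgebra_eq_span (hA : ∀ i, (A i).IsHermitian) (hB : ∀ j, (B j).IsHermitian) :
    Subalgebra.toSubmodule (wordAlgebra A B).toSubalgebra =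
      Submodule.span ℂ (Set.range (kroneckerWord A B)) := by
  have hstar : star (Set.range (kroneckerWord A B)) ⊆ Set.range (kroneckerWord A B) := by
    rintro x ⟨w, hw⟩
    rw [← star_star x, ← hw, star_eq_conjTranspose, kroneckerWord_conjTranspose hA hB]
    exact ⟨_, rfl⟩
  let words : Submonoid (Matrix (m × n) (m × n) ℂ) :=
    { carrier := Set.range (kroneckerWord A B)
      one_mem' := ⟨([], []), by simp [kroneckerWord, listProd]⟩
      mul_mem' := by
        rintro _ _ ⟨v, rfl⟩ ⟨w, rfl⟩
        exact ⟨_, (kroneckerWord_mul v w).symm⟩ }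
  have hclosure : (Submonoid.closure (Set.range (kroneckerWord A B)) : Set _) =
      Set.range (kroneckerWord A B) := congrArg _ words.closure_eq
  rw [wordAlgebra, StarAlgebra.adjoin_toSubalgebra, Set.union_eq_self_of_subset_right hstar,
    Algebra.adjoin_eq_span, hclosure]

lemma map_conjTranspose_mul_self_nonneg_of_mem_wordAlgebra {ι : Type*} [Fintype ι] [DecidableEq ι]
    {ρ : Matrix ι ι ℂ} (hρ : ρ.PosSemidef) {P : α → Matrix ι ι ℂ} {Q : β → Matrix ι ι ℂ}
    (hP : ∀ i, (P i).IsHermitian) (hQ : ∀ j, (Q j).IsHermitian)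
    (hcomm : ∀ i j, Commute (P i) (Q j))
    (hA : ∀ i, (A i).IsHermitian) (hB : ∀ j, (B j).IsHermitian)
    {φ : Matrix (m × n) (m × n) ℂ →ₗ[ℂ] ℂ}
    (hφ : ∀ w, φ (kroneckerWord A B w) = trace (ρ * listProd P w.1 * listProd Q w.2))
    {c : Matrix (m × n) (m × n) ℂ} (hc : c ∈ wordAlgebra A B) : 0 ≤ φ (cᴴ * c) := by
  have hspan : c ∈ Submodule.span ℂ (Set.range (kroneckerWord A B)) :=
    toSubmodule_wordAlgebra_eq_span hA hB ▸ hc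
  refine map_conjTranspose_mul_self_nonneg_of_mem_span hρ
    (u := fun w ↦ listProd P w.1 * listProd Q w.2) (fun v w ↦ ?_) hspan
  rw [kroneckerWord_conjTranspose hA hB, kroneckerWord_mul, hφ, (commute_listProd hcomm _ _).eq,
    conjTranspose_mul, listProd_conjTranspose hP, listProd_conjTranspose hQ,
    (commute_listProd hcomm _ _).symm.mul_mul_mul_comm, listProd_append, listProd_append, mul_assoc]

end KroneckerWords

section PartialTranspose

/-- The linear map `x ⊗ y ↦ x * y`. It turns moments of a commutative representation into a linear
functional on the tensor product. -/
def kroneckerToMul {l m n R : Type*} [Fintype m] [CommSemiring R] :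
    Matrix (l × m) (m × n) R →ₗ[R] Matrix l n R where
  toFun X := of fun i k ↦ ∑ j, X (i, j) (j, k)
  map_add' X Y := by ext; simp [Finset.sum_add_distrib]
  map_smul' r X := by ext; simp [Finset.mul_sum]

lemma kroneckerToMul_kronecker {l m n R : Type*} [Fintype m] [CommSemiring R]
    (x : Matrix l m R) (y : Matrix m n R) : kroneckerToMul (x ⊗ₖ y) = x * y :=
  rfl

variable {m n : Type*}

/-- The partial transpose `ptA` as a linear map. -/
def ptALinearMap (m n : Type*) : Matrix (m × n) (m × n) ℂ →ₗ[ℂ] Matrix (m × n) (m × n) ℂ where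
  toFun := ptA
  map_add' _ _ := rfl
  map_smul' _ _ := rfl

lemma ptA_kronecker (x : Matrix m m ℂ) (y : Matrix n n ℂ) : ptA (x ⊗ₖ y) = xᵀ ⊗ₖ y :=
  rfl

lemma trace_ptA_mul [Fintype m] [Fintype n] (X Y : Matrix (m × n) (m × n) ℂ) :
    trace (ptA X * Y) = trace (X * ptA Y) := by
  simp only [trace, diag, mul_apply, ptA, Fintype.sum_prod_type]
  rw [Finset.sum_comm]
  conv_rhs => rw [Finset.sum_comm]
  exact Finset.sum_congr rfl fun _ _ ↦ Finset.sum_comm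

variable {α β : Type*} [Fintype m] [DecidableEq m] [Fintype n] [DecidableEq n]
  {A : α → Matrix m m ℂ} {B : β → Matrix n n ℂ}

lemma ptA_kroneckerWord (w : List α × List β) :
    ptA (kroneckerWord A B w) = kroneckerWord (fun i ↦ (A i)ᵀ) B (w.1.reverse, w.2) := by
  rw [kroneckerWord, ptA_kronecker, listProd_transpose, kroneckerWord]

lemma ptA_mem_wordAlgebra (hA : ∀ i, (A i).IsHermitian) (hB : ∀ j, (B j).IsHermitian)
    {X : Matrix (m × n) (m × n) ℂ} (hX : X ∈ wordAlgebra A B) :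
    ptA X ∈ wordAlgebra (fun i ↦ (A i)ᵀ) B := by
  have hspan : Submodule.span ℂ (Set.range (kroneckerWord A B)) ≤
      (Subalgebra.toSubmodule (wordAlgebra (fun i ↦ (A i)ᵀ) B).toSubalgebra).comap
        (ptALinearMap m n) := by
    rw [Submodule.span_le]
    rintro _ ⟨w, rfl⟩
    change ptA (kroneckerWord A B w) ∈ wordAlgebra _ B
    rw [ptA_kroneckerWord]
    exact kroneckerWord_mem_wordAlgebra _
  exact hspan (toSubmodule_wordAlgebra_eq_span hA hB ▸ hX)

end PartialTranspose

theorem commutative_PPT_gives_tensorProduct_PPT_general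
    {ι α β : Type*} [Fintype ι] [DecidableEq ι]
    {ρt : Matrix ι ι ℂ} (hρ : ρt.PosSemidef)
    {At : α → Matrix ι ι ℂ} {Bt : β → Matrix ι ι ℂ}
    (hA : ∀ i, (At i).IsHermitian) (hB : ∀ j, (Bt j).IsHermitian)
    (hcomm : ∀ i j, Commute (At i) (Bt j))
    (hppt : ∀ (s : List α) (t : List β),
      trace (ρt * listProd At s * listProd Bt t) =
        trace (ρt * listProd At s.reverse * listProd Bt t)) :
    ∃ ρ : Matrix (ι × ι) (ι × ι) ℂ, ρ.PosSemidef ∧ (ptA ρ).PosSemidef ∧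
      ∀ (s : List α) (t : List β),
        trace (ρ * (listProd At s ⊗ₖ listProd Bt t)) =
          trace (ρt * listProd At s * listProd Bt t) := by
  let φ : Matrix (ι × ι) (ι × ι) ℂ →ₗ[ℂ] ℂ :=
    traceLinearMap ι ℂ ℂ ∘ₗ LinearMap.mulLeft ℂ ρt ∘ₗ kroneckerToMul
  have hφ (w : List α × List β) : φ (kroneckerWord At Bt w) =
      trace (ρt * listProd At w.1 * listProd Bt w.2) := by
    simp [φ, kroneckerWord, kroneckerToMul_kronecker, mul_assoc]
  obtain ⟨σ, hσS, hσpos, hσ⟩ := exists_posSemidef_mem_trace_mul_eq (wordAlgebra At Bt)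
    fun c hc ↦
      map_conjTranspose_mul_self_nonneg_of_mem_wordAlgebra hρ hA hB hcomm hA hB hφ hc
  have hσword (w : List α × List β) : trace (σ * kroneckerWord At Bt w) =
      trace (ρt * listProd At w.1 * listProd Bt w.2) :=
    (hσ _ (kroneckerWord_mem_wordAlgebra w)).trans (hφ w)
  have hptword (w : List α × List β) :
      trace (ptA σ * kroneckerWord (fun i ↦ (At i)ᵀ) Bt w) =
        trace (ρt * listProd At w.1 * listProd Bt w.2) := by
    rw [trace_ptA_mul, ptA_kroneckerWord, hppt]
    exact hσword (w.1.reverse, w.2)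
  have hptpos : ∀ c ∈ wordAlgebra (fun i ↦ (At i)ᵀ) Bt, 0 ≤ trace (ptA σ * (cᴴ * c)) :=
    fun c hc ↦ map_conjTranspose_mul_self_nonneg_of_mem_wordAlgebra
      (φ := traceLinearMap (ι × ι) ℂ ℂ ∘ₗ LinearMap.mulLeft ℂ (ptA σ))
      hρ hA hB hcomm (fun i ↦ (hA i).transpose) hB hptword hc
  have hptS := ptA_mem_wordAlgebra hA hB hσS
  exact ⟨σ, hσpos, posSemidef_of_forall_mem_trace_mul_nonneg
    (isHermitian_of_forall_mem_trace_mul_nonneg hptS hptpos) hptS hptpos,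
    fun s t ↦ hσword (s, t)⟩

section Reindex

lemma trace_submatrix_equiv {m n R : Type*} [Fintype m] [Fintype n] [AddCommMonoid R]
    (e : m ≃ n) (M : Matrix n n R) : trace (M.submatrix e e) = trace M :=
  e.sum_comp fun i ↦ M i i

lemma exists_fin_tensorProduct_PPT {α β m n : Type*} [Fintype m] [Nonempty m] [Fintype n]
    [Nonempty n] {σ : Matrix (m × n) (m × n) ℂ} (hσ : σ.PosSemidef) (htr : trace σ = 1)
    (hpt : (ptA σ).PosSemidef) {A : α → Matrix m m ℂ} {B : β → Matrix n n ℂ}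
    (hA : ∀ i, (A i).IsHermitian ∧ A i * A i = A i)
    (hB : ∀ j, (B j).IsHermitian ∧ B j * B j = B j) :
    ∃ (dA dB : ℕ), 0 < dA ∧ 0 < dB ∧
    ∃ (ρ : Matrix (Fin dA × Fin dB) (Fin dA × Fin dB) ℂ)
      (A' : α → Matrix (Fin dA) (Fin dA) ℂ) (B' : β → Matrix (Fin dB) (Fin dB) ℂ),
      ρ.PosSemidef ∧ trace ρ = 1 ∧ (ptA ρ).PosSemidef ∧
      (∀ i, (A' i).IsHermitian ∧ A' i * A' i = A' i) ∧
      (∀ j, (B' j).IsHermitian ∧ B' j * B' j = B' j) ∧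
      (∀ i j, trace (ρ * (A' i ⊗ₖ B' j)) = trace (σ * (A i ⊗ₖ B j))) := by
  let eA := (Fintype.equivFin m).symm
  let eB := (Fintype.equivFin n).symm
  let e := eA.prodCongr eB
  refine ⟨Fintype.card m, Fintype.card n, Fintype.card_pos, Fintype.card_pos,
    σ.submatrix e e, fun i ↦ (A i).submatrix eA eA, fun j ↦ (B j).submatrix eB eB,
    hσ.submatrix e, (trace_submatrix_equiv e σ).trans htr, hpt.submatrix e,
    fun i ↦ ⟨(hA i).1.submatrix eA, by rw [submatrix_mul_equiv, (hA i).2]⟩,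
    fun j ↦ ⟨(hB j).1.submatrix eB, by rw [submatrix_mul_equiv, (hB j).2]⟩, fun i j ↦ ?_⟩
  have hkronecker : (A i).submatrix eA eA ⊗ₖ (B j).submatrix eB eB =
      (A i ⊗ₖ B j).submatrix e e :=
    rfl
  rw [hkronecker, submatrix_mul_equiv, trace_submatrix_equiv]

end Reindex

lemma isHermitian_of_im_eq_zero_of_transpose_eq {n : Type*} {M : Matrix n n ℂ}
    (hreal : ∀ p q, (M p q).im = 0) (hsymm : Mᵀ = M) : M.IsHermitian := by
  have hconj : M.map star = M := by
    ext p q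
    exact Complex.conj_eq_iff_im.2 (hreal p q)
  rw [IsHermitian, conjTranspose, hsymm, hconj]

/-- Proposition 2, converse direction, finite dimensions: a commutative
PPT quantum representation in finite dimensions yields a tensor-product PPT quantum
representation reproducing the same expectation values. -/
theorem commutative_PPT_gives_tensorProduct_PPT
    {ι α β : Type*} [Fintype ι] [Nonempty ι] [DecidableEq ι]
    (ρt : Matrix ι ι ℂ) (hρ : ρt.PosSemidef) (htr : Matrix.trace ρt = 1)
    (hreal : ∀ p q, (ρt p q).im = 0)
    (At : α → Matrix ι ι ℂ) (Bt : β → Matrix ι ι ℂ)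
    (hAreal : ∀ i p q, ((At i) p q).im = 0) (hBreal : ∀ j p q, ((Bt j) p q).im = 0)
    (hAsym : ∀ i, (At i)ᵀ = At i) (hBsym : ∀ j, (Bt j)ᵀ = Bt j)
    (hAidem : ∀ i, At i * At i = At i) (hBidem : ∀ j, Bt j * Bt j = Bt j)
    (hcomm : ∀ i j, At i * Bt j = Bt j * At i)
    (hppt : ∀ (s : List α) (t : List β),
      Matrix.trace (ρt * listProd At s * listProd Bt t) =
        Matrix.trace (ρt * listProd At s.reverse * listProd Bt t)) :
    ∃ (dA dB : ℕ), 0 < dA ∧ 0 < dB ∧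
    ∃ (ρ : Matrix (Fin dA × Fin dB) (Fin dA × Fin dB) ℂ)
      (A : α → Matrix (Fin dA) (Fin dA) ℂ) (B : β → Matrix (Fin dB) (Fin dB) ℂ),
      ρ.PosSemidef ∧ Matrix.trace ρ = 1 ∧ (ptA ρ).PosSemidef ∧
      (∀ i, (A i).IsHermitian ∧ A i * A i = A i) ∧
      (∀ j, (B j).IsHermitian ∧ B j * B j = B j) ∧
      (∀ i j, Matrix.trace (ρ * ((A i) ⊗ₖ (B j))) = Matrix.trace (ρt * (At i * Bt j))) := by
  have hA i := isHermitian_of_im_eq_zero_of_transpose_eq (hAreal i) (hAsym i)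
  have hB j := isHermitian_of_im_eq_zero_of_transpose_eq (hBreal j) (hBsym j)
  obtain ⟨ρ, hρpos, hρpt, hword⟩ :=
    commutative_PPT_gives_tensorProduct_PPT_general hρ hA hB hcomm hppt
  have hρtr : trace ρ = 1 := by simpa [listProd, htr] using hword [] []
  have hpair i j : trace (ρ * (At i ⊗ₖ Bt j)) = trace (ρt * (At i * Bt j)) := by
    simpa [listProd, mul_assoc] using hword [i] [j]
  simpa only [hpair] using exists_fin_tensorProduct_PPT hρpos hρtr hρpt
    (fun i ↦ ⟨hA i, hAidem i⟩) (fun j ↦ ⟨hB j, hBidem j⟩)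
end
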